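/- Under the standing assumptions, q = q_{μ,2} is a metric on X, and the identity map from (X,d) to (X,q) is a homeomorphism. -/

import Mathlib

open Metric MeasureTheory Set Filter Topology UniformSpace ENNReal
open scoped NNReal

noncomputable section

/-- The set `B_{xy} = B(x, d(x,y)) ∪ B(y, d(x,y))`. -/
def pairBall {X : Type*} [MetricSpace X] (x y : X) : Set X :=
  Metric.ball x (dist x y) ∪ Metric.ball y (dist x y)

/-- A `δ`-chain from `x` to `y`: a finite sequence `z 0 = x, …, z m = y` with
consecutive distances at most `δ`. -/
def IsDeltaChain {X : Type*} [MetricSpace X] (δ : ℝ) (x y : X) (z : ℕ → X) (m : ℕ) : Prop :=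
  z 0 = x ∧ z m = y ∧ ∀ j < m, dist (z j) (z (j + 1)) ≤ δ

/-- `q^δ_{μ,s}(x,y)`: infimum of `∑ μ(B_{x_j x_{j-1}})^{1/s}` over `δ`-chains from `x` to `y`. -/
def qDelta {X : Type*} [MetricSpace X] [MeasurableSpace X]
    (μ : Measure X) (s δ : ℝ) (x y : X) : ℝ≥0∞ :=
  ⨅ (m : ℕ) (z : ℕ → X) (_ : IsDeltaChain δ x y z m),
    ∑ j ∈ Finset.range m, μ (pairBall (z j) (z (j + 1))) ^ (1 / s)

/-- `q_{μ,s}(x,y) = limsup_{δ → 0⁺} q^δ_{μ,s}(x,y)`. -/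
def qmu {X : Type*} [MetricSpace X] [MeasurableSpace X]
    (μ : Measure X) (s : ℝ) (x y : X) : ℝ≥0∞ :=
  Filter.limsup (fun δ => qDelta μ s δ x y) (nhdsWithin (0 : ℝ) (Set.Ioi 0))

/-- `μ` is a doubling measure with constant `CD`: balls have positive finite measure and
`μ(B(x,2r)) ≤ CD · μ(B(x,r))`. -/
def IsDoublingWith {X : Type*} [MetricSpace X] [MeasurableSpace X]
    (μ : Measure X) (CD : ℝ≥0) : Prop :=
  (∀ (x : X) (r : ℝ), 0 < r → 0 < μ (Metric.ball x r) ∧ μ (Metric.ball x r) < ⊤) ∧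
    ∀ (x : X) (r : ℝ), 0 < r → μ (Metric.ball x (2 * r)) ≤ CD * μ (Metric.ball x r)

/-- `μ` is a `CW`-weak metric doubling measure of dimension `s`:
`μ(B_{xy})^{1/s} ≤ CW · q_{μ,s}(x,y)` for all `x, y`. -/
def IsWMDM {X : Type*} [MetricSpace X] [MeasurableSpace X]
    (μ : Measure X) (s : ℝ) (CW : ℝ≥0) : Prop :=
  ∀ x y : X, μ (pairBall x y) ^ (1 / s) ≤ CW * qmu μ s x y

/-- A continuum is a compact connected set. -/
def IsContinuum {X : Type*} [TopologicalSpace X] (K : Set X) : Prop :=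
  IsCompact K ∧ IsConnected K

/-- `X` is `λ`-linearly locally connected. -/
def IsLLC (X : Type*) [MetricSpace X] (lam : ℝ) : Prop :=
  ∀ (x : X) (r : ℝ), 0 < r →
    (∀ y ∈ Metric.ball x r, ∀ z ∈ Metric.ball x r,
      ∃ K : Set X, IsContinuum K ∧ K ⊆ Metric.ball x (lam * r) ∧ y ∈ K ∧ z ∈ K) ∧
    (∀ y z : X, y ∉ Metric.ball x r → z ∉ Metric.ball x r →
      ∃ K : Set X, IsContinuum K ∧ K ⊆ (Metric.ball x (r / lam))ᶜ ∧ y ∈ K ∧ z ∈ K)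

/-- The sphere `S²`, with the metric inherited from `ℝ³`. -/
abbrev Sphere2 : Set (EuclideanSpace ℝ (Fin 3)) := Metric.sphere 0 1

/-- A circle domain in `S²`: an open connected set each of whose complementary
connected components is a point or a round closed disk (a closed metric ball). -/
def IsCircleDomainS2 (Ω : Set ↥Sphere2) : Prop :=
  IsOpen Ω ∧ IsConnected Ω ∧ ∀ p ∈ Ωᶜ,
    connectedComponentIn Ωᶜ p = {p} ∨
      ∃ (c : ↥Sphere2) (ρ : ℝ), 0 < ρ ∧ connectedComponentIn Ωᶜ p = Metric.closedBall c ρ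

/-- A circle domain in the plane. -/
def IsCircleDomainC (Ω : Set ℂ) : Prop :=
  IsOpen Ω ∧ IsConnected Ω ∧ ∀ p ∈ Ωᶜ,
    connectedComponentIn Ωᶜ p = {p} ∨
      ∃ (c : ℂ) (ρ : ℝ), 0 < ρ ∧ connectedComponentIn Ωᶜ p = Metric.closedBall c ρ

/-- The residual set `X̄ ∖ X` inside the completion of `X`. -/
def resid (X : Type*) [MetricSpace X] : Set (Completion X) :=
  (Set.range ((↑) : X → Completion X))ᶜ

/-- The collection of connected components of `X̄ ∖ X`. -/
def residComps (X : Type*) [MetricSpace X] : Set (Set (Completion X)) :=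
  {C | ∃ p ∈ resid X, C = connectedComponentIn (resid X) p}

/-- Distance between two sets. -/
def setSetDist {Z : Type*} [MetricSpace Z] (A B : Set Z) : ℝ :=
  sInf (Set.image2 dist A B)

/-- `f` is `η`-quasisymmetric, for a homeomorphism `η` of `[0,∞)`. -/
def IsQSWith {X Y : Type*} [MetricSpace X] [MetricSpace Y]
    (η : ℝ≥0 ≃ₜ ℝ≥0) (f : X → Y) : Prop :=
  ∀ x y z : X, x ≠ z →
    nndist (f x) (f y) ≤ η (nndist x y / nndist x z) * nndist (f x) (f z)

/-- `ℓ = ⌈log₂ λ⌉`. -/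
def ellOf (lam : ℝ) : ℕ := (Int.ceil (Real.logb 2 lam)).toNat

/-- The constant `C_S = 16 C_W C_D^{28+16⌈log₂ λ⌉}`. -/
def CSconst (lam : ℝ) (CD CW : ℝ≥0) : ℝ≥0∞ :=
  16 * (CW : ℝ≥0∞) * (CD : ℝ≥0∞) ^ (28 + 16 * ellOf lam)

/-- `K` separates `A` and `B`: `A` and `B` lie in different components of the complement of `K`. -/
def SeparatesSets {X : Type*} [TopologicalSpace X] (K A B : Set X) : Prop :=
  A ⊆ Kᶜ ∧ B ⊆ Kᶜ ∧
    ∀ p ∈ A, ∀ p' ∈ B, connectedComponentIn Kᶜ p ≠ connectedComponentIn Kᶜ p'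

/-- A topological disk: a set homeomorphic to an open disk in the plane. -/
def IsTopDisk {X : Type*} [TopologicalSpace X] (U : Set X) : Prop :=
  Nonempty (↥U ≃ₜ ↥(Metric.ball (0 : ℂ) 1))

/-- Lower line integral `∫_γ ρ ds` over `γ : [a,b] → Y`, as a supremum of lower sums
over partitions of `[a,b]`. -/
def lowerLineIntegral {Y : Type*} [PseudoEMetricSpace Y]
    (ρ : Y → ℝ≥0∞) (γ : ℝ → Y) (a b : ℝ) : ℝ≥0∞ :=
  ⨆ (n : ℕ) (t : ℕ → ℝ) (_ : t 0 = a) (_ : t n = b) (_ : ∀ j < n, t j ≤ t (j + 1)),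
    ∑ j ∈ Finset.range n,
      (⨅ u ∈ Set.Icc (t j) (t (j + 1)), ρ (γ u)) * edist (γ (t j)) (γ (t (j + 1)))

/-- `γ` (with parameter interval `[0,1]`) is locally rectifiable on the open interval `(0,1)`. -/
def LocRectifiableOn {Y : Type*} [PseudoEMetricSpace Y] (γ : ℝ → Y) : Prop :=
  ∀ c d : ℝ, 0 < c → c ≤ d → d < 1 → eVariationOn γ (Set.Icc c d) < ⊤

/-- The line integral of `ρ` over the open part of `γ`. -/
def openLineIntegral {Y : Type*} [PseudoEMetricSpace Y] (ρ : Y → ℝ≥0∞) (γ : ℝ → Y) : ℝ≥0∞ :=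
  ⨆ (c : ℝ) (d : ℝ) (_ : 0 < c) (_ : c ≤ d) (_ : d < 1), lowerLineIntegral ρ γ c d

/-- `ρ` is admissible for the path family `Γ`. -/
def IsAdmissible {Y : Type*} [PseudoEMetricSpace Y] (Γ : Set (ℝ → Y)) (ρ : Y → ℝ≥0∞) : Prop :=
  ∀ γ ∈ Γ, LocRectifiableOn γ → 1 ≤ openLineIntegral ρ γ

def borelSpaceBorel (Y : Type*) [TopologicalSpace Y] : @BorelSpace Y _ (borel Y) :=
  @BorelSpace.mk Y _ (borel Y) rfl

/-- The Hausdorff 2-measure of a metric space, normalized to coincide with Lebesgue measure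
in the Euclidean plane. -/
def hausdorff2 (Y : Type*) [EMetricSpace Y] : @Measure Y (borel Y) :=
  ENNReal.ofReal (Real.pi / 4) •
    @Measure.hausdorffMeasure Y _ (borel Y) (borelSpaceBorel Y) 2

/-- The conformal modulus of a path family in a metric space, with respect to the
(normalized) Hausdorff 2-measure. -/
def modulusH2 {Y : Type*} [EMetricSpace Y] (Γ : Set (ℝ → Y)) : ℝ≥0∞ :=
  ⨅ (ρ : Y → ℝ≥0∞) (_ : @Measurable Y ℝ≥0∞ (borel Y) _ ρ) (_ : IsAdmissible Γ ρ),
    @MeasureTheory.lintegral Y (borel Y) (hausdorff2 Y) fun y => ρ y ^ 2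

/-- The conformal modulus of a path family in the plane, with respect to Lebesgue area measure. -/
def modulusC (Γ : Set (ℝ → ℂ)) : ℝ≥0∞ :=
  ⨅ (ρ : ℂ → ℝ≥0∞) (_ : Measurable ρ) (_ : IsAdmissible Γ ρ), ∫⁻ z, ρ z ^ 2

/-- A homeomorphism between metric spaces is `K`-quasiconformal if it distorts moduli of
path families by a factor of at most `K` in both directions. -/
def IsQCWith {Y Z : Type*} [EMetricSpace Y] [EMetricSpace Z] (K : ℝ≥0∞) (f : Y ≃ₜ Z) : Prop :=
  ∀ Γ : Set (ℝ → Y),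
    modulusH2 ((fun γ => (f : Y → Z) ∘ γ) '' Γ) ≤ K * modulusH2 Γ ∧
      modulusH2 Γ ≤ K * modulusH2 ((fun γ => (f : Y → Z) ∘ γ) '' Γ)

/-- The family `Γ(A,B;G)` of paths joining `A` and `B` in `G` (parameter interval `[0,1]`). -/
def joinPaths (A B G : Set ℂ) : Set (ℝ → ℂ) :=
  {γ | ContinuousOn γ (Set.Icc 0 1) ∧ γ 0 ∈ A ∧ γ 1 ∈ B ∧
    γ 0 ∈ closure G ∧ γ 1 ∈ closure G ∧ ∀ u ∈ Set.Ioo (0 : ℝ) 1, γ u ∈ G}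

/-- The constant `α = 2^{−2−2M−π²C_W²C_D^{1+log₂ C_X}/(8 log 2)}`. -/
def alphaConst (M : ℕ) (CD CW : ℝ≥0) (CX : ℝ) : ℝ :=
  (2 : ℝ) ^ (-2 - 2 * (M : ℝ) -
    Real.pi ^ 2 * (CW : ℝ) ^ 2 * (CD : ℝ) ^ ((1 : ℝ) + Real.logb 2 CX) / (8 * Real.log 2))

/-!
The only nontrivial point is continuity: `q(x, y) → 0` as `y → x`, since the weak metric doubling
condition bounds `q` from below. Let `ρ = d(x, y)`, work in a chart around `x`, and let `u` be the
`q^δ`-distance to a small ball around `x`, sampled on a fine net. For every height `t` between the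
values of `u` near `x` and near `y`, the union of the small balls around the net points where `u`
is about `t` separates `x` from `y`. A simply connected space has Janiszewski's property
(Mayer–Vietoris), so a minimal subfamily that still separates is chain connected. Linear local
connectivity forces this family to reach across the scale `ρ/4^j` within distance comparable to
`ρ/4^j` of `x` or `y`, for some `j`. The family contains a chain at that scale, so by the weak
metric doubling condition the sum of the gauges `μ(B)^{1/2}` over the balls of the layer is at
least a multiple of `μ(B(c, ρ/4^j))^{1/2}`, where `c ∈ {x, y}`. On the other hand the integral of
this sum over all `t` is at most `∑ μ(B) ≲ μ(B(c, ρ/4^j))`, because the dimension is `2`; hence the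
set of such heights `t` has measure at most a multiple of `μ(B(c, ρ/4^j))^{1/2}`. By reverse
doubling these bounds sum over `j` to a multiple of `μ(B(x, ρ))^{1/2} + μ(B(y, ρ))^{1/2}`, which
therefore bounds the length of the whole range of heights, that is `q(x, y)`, and tends to `0` with
`ρ`.
-/

/-! ### Chains and the chain distance -/

section Chains

variable {X : Type*} [MetricSpace X]

theorem pairBall_comm (x y : X) : pairBall x y = pairBall y x := by
  unfold pairBall
  rw [dist_comm, union_comm]

theorem pairBall_subset_ball {x y : X} {r : ℝ} (h : dist x y ≤ r) :
    pairBall x y ⊆ Metric.ball x (2 * r) :=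
  union_subset (ball_subset_ball (by linarith [dist_nonneg (x := x) (y := y)]))
    (ball_subset_ball' (by linarith [dist_comm y x]))

theorem IsDeltaChain.reverse {δ : ℝ} {x y : X} {c : ℕ → X} {m : ℕ} (hc : IsDeltaChain δ x y c m) :
    IsDeltaChain δ y x (fun j => c (m - j)) m := by
  refine ⟨by simpa using hc.2.1, by simpa using hc.1, fun j hj => ?_⟩
  have h := hc.2.2 (m - (j + 1)) (by omega)
  rwa [show m - (j + 1) + 1 = m - j by omega, dist_comm] at h

theorem IsDeltaChain.exists_append {δ : ℝ} {x y z : X} {a b : ℕ → X} {m n : ℕ}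
    (ha : IsDeltaChain δ x y a m) (hb : IsDeltaChain δ y z b n) :
    ∃ c : ℕ → X, IsDeltaChain δ x z c (m + n) ∧ (∀ j ≤ m, c j = a j) ∧ ∀ j, c (m + j) = b j := by
  set c : ℕ → X := fun j => if j ≤ m then a j else b (j - m) with hc
  have hca : ∀ j ≤ m, c j = a j := fun j hj => if_pos hj
  have hcb : ∀ j, c (m + j) = b j := by
    intro j
    rcases j.eq_zero_or_pos with rfl | hj
    · rw [add_zero, hca m le_rfl, ha.2.1, hb.1]
    · simp [hc, hj.ne']
  refine ⟨c, ⟨by rw [hca 0 zero_le, ha.1], by rw [hcb, hb.2.1], fun j hj => ?_⟩, hca, hcb⟩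
  rcases lt_or_ge j m with hjm | hmj
  · rw [hca j hjm.le, hca (j + 1) hjm]
    exact ha.2.2 j hjm
  · obtain ⟨i, rfl⟩ := Nat.exists_eq_add_of_le hmj
    rw [hcb, add_assoc, hcb]
    exact hb.2.2 i (by omega)

variable [MeasurableSpace X] {μ : Measure X} {s δ : ℝ} {x y : X}

theorem qDelta_le_sum {c : ℕ → X} {m : ℕ} (hc : IsDeltaChain δ x y c m) :
    qDelta μ s δ x y ≤ ∑ j ∈ Finset.range m, μ (pairBall (c j) (c (j + 1))) ^ (1 / s) :=
  iInf_le_of_le m (iInf_le_of_le c (iInf_le_of_le hc le_rfl))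

theorem qDelta_self (x : X) : qDelta μ s δ x x = 0 := by
  have hc : IsDeltaChain δ x x (fun _ => x) 0 := ⟨rfl, rfl, by simp⟩
  simpa using qDelta_le_sum (μ := μ) (s := s) hc

theorem qDelta_le_of_dist_le (h : dist x y ≤ δ) :
    qDelta μ s δ x y ≤ μ (pairBall x y) ^ (1 / s) := by
  have hc : IsDeltaChain δ x y (fun j => if j = 0 then x else y) 1 := ⟨by simp, by simp, by simpa⟩
  simpa using qDelta_le_sum (μ := μ) (s := s) hc

theorem qDelta_anti (x y : X) : Antitone fun δ => qDelta μ s δ x y := fun _ _ h =>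
  le_iInf fun _ => le_iInf fun _ => le_iInf fun hc =>
    qDelta_le_sum ⟨hc.1, hc.2.1, fun j hj => (hc.2.2 j hj).trans h⟩

theorem qDelta_comm (x y : X) : qDelta μ s δ x y = qDelta μ s δ y x := by
  suffices h : ∀ x y : X, qDelta μ s δ y x ≤ qDelta μ s δ x y from le_antisymm (h y x) (h x y)
  refine fun x y => le_iInf fun m => le_iInf fun c => le_iInf fun hc =>
    (qDelta_le_sum hc.reverse).trans ?_
  rw [← Finset.sum_range_reflect]
  refine Finset.sum_le_sum fun j hj => ?_
  have hj := Finset.mem_range.1 hj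
  rw [show m - (m - 1 - j) = j + 1 by omega, show m - (m - 1 - j + 1) = j by omega, pairBall_comm]

theorem qDelta_triangle (x y z : X) :
    qDelta μ s δ x z ≤ qDelta μ s δ x y + qDelta μ s δ y z := by
  conv_rhs => unfold qDelta
  simp only [ENNReal.iInf_add, ENNReal.add_iInf]
  refine le_iInf fun n => le_iInf fun b => le_iInf fun hb =>
    le_iInf fun m => le_iInf fun a => le_iInf fun ha => ?_
  obtain ⟨c, hc, hca, hcb⟩ := ha.exists_append hb
  refine (qDelta_le_sum hc).trans_eq ?_
  rw [Finset.sum_range_add]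
  congr 1
  · refine Finset.sum_congr rfl fun j hj => ?_
    have hj := Finset.mem_range.1 hj
    rw [hca j hj.le, hca (j + 1) hj]
  · simp only [add_assoc, hcb]

theorem qDelta_le_qmu (hδ : 0 < δ) (x y : X) : qDelta μ s δ x y ≤ qmu μ s x y := by
  refine le_limsup_of_frequently_le' (Eventually.frequently ?_)
  filter_upwards [Ioo_mem_nhdsGT hδ] with t ht
  exact qDelta_anti x y ht.2.le

theorem qmu_le {b : ℝ≥0∞} (h : ∀ δ : ℝ, 0 < δ → qDelta μ s δ x y ≤ b) : qmu μ s x y ≤ b := by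
  refine limsup_le_of_le (by isBoundedDefault) ?_
  filter_upwards [self_mem_nhdsWithin] with t ht
  exact h t ht

theorem exists_lt_qDelta {b : ℝ≥0∞} (h : b < qmu μ s x y) : ∃ δ > 0, b < qDelta μ s δ x y := by
  contrapose! h
  exact qmu_le h

theorem qmu_self (x : X) : qmu μ s x x = 0 :=
  le_antisymm (qmu_le fun _ _ => (qDelta_self x).le) bot_le

theorem qmu_comm (x y : X) : qmu μ s x y = qmu μ s y x := by
  unfold qmu
  simp_rw [qDelta_comm x y]

theorem qmu_triangle (x y z : X) : qmu μ s x z ≤ qmu μ s x y + qmu μ s y z :=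
  qmu_le fun _ hδ => (qDelta_triangle x y z).trans
    (add_le_add (qDelta_le_qmu hδ x y) (qDelta_le_qmu hδ y z))

end Chains

/-! ### The gauge of a ball -/

section BallGauge

variable {X : Type*} [MetricSpace X] [MeasurableSpace X]

/-- The gauge `μ(B(x, r))^{1/s}` of a ball, i.e. its radius as measured by the measure `μ` of
dimension `s`. -/
def ballGauge (μ : Measure X) (s : ℝ) (x : X) (r : ℝ) : ℝ≥0∞ := μ (Metric.ball x r) ^ (1 / s)

variable {μ : Measure X} {s δ r r' : ℝ} {x y z : X} {CD : ℝ≥0}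

theorem ballGauge_of_nonpos (hs : 0 < s) (hr : r ≤ 0) : ballGauge μ s x r = 0 := by
  rw [ballGauge, ball_eq_empty.2 hr, measure_empty, ENNReal.zero_rpow_of_pos (one_div_pos.2 hs)]

theorem ballGauge_le_ballGauge (hs : 0 < s) (h : r + dist x y ≤ r') :
    ballGauge μ s x r ≤ ballGauge μ s y r' :=
  ENNReal.rpow_le_rpow (measure_mono (ball_subset_ball' h)) (one_div_pos.2 hs).le

theorem ballGauge_mono (hs : 0 < s) (x : X) : Monotone (ballGauge μ s x) := fun _ _ h =>
  ballGauge_le_ballGauge hs (by simpa using h)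

theorem ballGauge_sq (x : X) (r : ℝ) : ballGauge μ 2 x r ^ 2 = μ (Metric.ball x r) := by
  rw [ballGauge, ← ENNReal.rpow_natCast, ← ENNReal.rpow_mul]
  norm_num

theorem measure_pairBall_rpow_le_ballGauge (hs : 0 < s) (h : dist x y ≤ r) :
    μ (pairBall x y) ^ (1 / s) ≤ ballGauge μ s x (2 * r) :=
  ENNReal.rpow_le_rpow (measure_mono (pairBall_subset_ball h)) (one_div_pos.2 hs).le

theorem ballGauge_le_measure_pairBall_rpow (hs : 0 < s) (x y : X) :
    ballGauge μ s x (dist x y) ≤ μ (pairBall x y) ^ (1 / s) :=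
  ENNReal.rpow_le_rpow (measure_mono subset_union_left) (one_div_pos.2 hs).le

theorem qDelta_le_ballGauge (hs : 0 < s) (hr : dist x y ≤ r) (hδ : dist x y ≤ δ) :
    qDelta μ s δ x y ≤ ballGauge μ s x (2 * r) :=
  (qDelta_le_of_dist_le hδ).trans (measure_pairBall_rpow_le_ballGauge hs hr)

namespace IsDoublingWith

theorem ballGauge_pos (h : IsDoublingWith μ CD) (hr : 0 < r) (x : X) : 0 < ballGauge μ s x r :=
  ENNReal.rpow_pos (h.1 x r hr).1 (h.1 x r hr).2.ne

theorem ballGauge_ne_top (h : IsDoublingWith μ CD) (hs : 0 < s) (x : X) (r : ℝ) :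
    ballGauge μ s x r ≠ ⊤ := by
  rcases le_or_gt r 0 with hr | hr
  · simp [ballGauge_of_nonpos hs hr]
  · exact ENNReal.rpow_ne_top_of_nonneg (one_div_pos.2 hs).le (h.1 x r hr).2.ne

theorem measure_ball_two_pow_mul_le (h : IsDoublingWith μ CD) (x : X) (hr : 0 < r) (k : ℕ) :
    μ (Metric.ball x (2 ^ k * r)) ≤ (CD : ℝ≥0∞) ^ k * μ (Metric.ball x r) := by
  induction k with
  | zero => simp
  | succ k ih =>
    calc μ (Metric.ball x (2 ^ (k + 1) * r)) = μ (Metric.ball x (2 * (2 ^ k * r))) := by ring_nf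
      _ ≤ CD * μ (Metric.ball x (2 ^ k * r)) := h.2 x _ (by positivity)
      _ ≤ CD * (CD ^ k * μ (Metric.ball x r)) := by gcongr
      _ = CD ^ (k + 1) * μ (Metric.ball x r) := by ring

theorem ballGauge_le_pow_mul (h : IsDoublingWith μ CD) (hs : 0 < s) (k : ℕ)
    (hr : r + dist x y ≤ 2 ^ k * r') :
    ballGauge μ s x r ≤ ((CD ^ (1 / s) : ℝ≥0) : ℝ≥0∞) ^ k * ballGauge μ s y r' := by
  have hs' : 0 ≤ 1 / s := (one_div_pos.2 hs).le
  rcases le_or_gt r' 0 with hr' | hr'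
  · have : 2 ^ k * r' ≤ 0 := mul_nonpos_of_nonneg_of_nonpos (by positivity) hr'
    rw [ballGauge_of_nonpos hs (by linarith [dist_nonneg (x := x) (y := y)])]
    exact zero_le
  calc ballGauge μ s x r ≤ ballGauge μ s y (2 ^ k * r') := ballGauge_le_ballGauge hs hr
    _ ≤ ((CD : ℝ≥0∞) ^ k * μ (Metric.ball y r')) ^ (1 / s) :=
      ENNReal.rpow_le_rpow (h.measure_ball_two_pow_mul_le y hr' k) hs'
    _ = ((CD ^ (1 / s) : ℝ≥0) : ℝ≥0∞) ^ k * ballGauge μ s y r' := by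
      rw [ENNReal.mul_rpow_of_nonneg _ _ hs', ENNReal.coe_rpow_of_nonneg _ hs', ballGauge,
        ← ENNReal.rpow_natCast, ← ENNReal.rpow_natCast, ← ENNReal.rpow_mul, ← ENNReal.rpow_mul,
        mul_comm (k : ℝ)]

end IsDoublingWith

section ReverseDoubling

theorem exists_dist_eq_of_le_dist {X : Type*} [MetricSpace X] [PreconnectedSpace X] {x z : X}
    {a : ℝ} (ha : 0 ≤ a) (h : a ≤ dist x z) : ∃ p, dist x p = a :=
  mem_range_of_exists_le_of_exists_ge (continuous_const.dist continuous_id)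
    ⟨x, by simpa using ha⟩ ⟨z, h⟩

variable [OpensMeasurableSpace X] [PreconnectedSpace X]

namespace IsDoublingWith

theorem measure_ball_div_four_le (h : IsDoublingWith μ CD) (hr : 0 < r) (hz : r / 2 ≤ dist x z) :
    μ (Metric.ball x (r / 4)) ≤ (1 - ((CD : ℝ≥0∞) ^ 3)⁻¹) * μ (Metric.ball x r) := by
  obtain ⟨p, hp⟩ := exists_dist_eq_of_le_dist (half_pos hr).le hz
  have hp' := dist_comm p x
  have hM : μ (Metric.ball x r) / (CD : ℝ≥0∞) ^ 3 ≤ μ (Metric.ball p (r / 4)) := by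
    refine ENNReal.div_le_of_le_mul' ?_
    refine le_trans (measure_mono (ball_subset_ball' ?_))
      (h.measure_ball_two_pow_mul_le p (by positivity : 0 < r / 4) 3)
    linarith
  have hdisj : Disjoint (Metric.ball x (r / 4)) (Metric.ball p (r / 4)) :=
    ball_disjoint_ball (by linarith)
  rw [ENNReal.sub_mul fun _ _ => (h.1 x r hr).2.ne, one_mul, mul_comm, ← div_eq_mul_inv]
  refine ENNReal.le_sub_of_add_le_right (ne_top_of_le_ne_top (h.1 p _ (by positivity)).2.ne hM) ?_
  calc μ (Metric.ball x (r / 4)) + μ (Metric.ball x r) / (CD : ℝ≥0∞) ^ 3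
      ≤ μ (Metric.ball x (r / 4)) + μ (Metric.ball p (r / 4)) := by gcongr
    _ = μ (Metric.ball x (r / 4) ∪ Metric.ball p (r / 4)) :=
      (measure_union hdisj measurableSet_ball).symm
    _ ≤ μ (Metric.ball x r) := measure_mono
      (union_subset (ball_subset_ball (by linarith)) (ball_subset_ball' (by linarith)))

theorem measure_ball_div_four_pow_le (h : IsDoublingWith μ CD) (hr : 0 < r)
    (hz : r / 2 ≤ dist x z) (j : ℕ) :
    μ (Metric.ball x (r / 4 ^ j)) ≤ (1 - ((CD : ℝ≥0∞) ^ 3)⁻¹) ^ j * μ (Metric.ball x r) := by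
  induction j with
  | zero => simp
  | succ j ih =>
    have hj : r / 4 ^ j / 2 ≤ dist x z := by
      have : r / 4 ^ j ≤ r := div_le_self hr.le (one_le_pow₀ (by norm_num))
      linarith
    calc μ (Metric.ball x (r / 4 ^ (j + 1))) = μ (Metric.ball x (r / 4 ^ j / 4)) := by
          rw [pow_succ, div_div]
      _ ≤ (1 - ((CD : ℝ≥0∞) ^ 3)⁻¹) * μ (Metric.ball x (r / 4 ^ j)) :=
          h.measure_ball_div_four_le (by positivity) hj
      _ ≤ (1 - ((CD : ℝ≥0∞) ^ 3)⁻¹) * ((1 - ((CD : ℝ≥0∞) ^ 3)⁻¹) ^ j * μ (Metric.ball x r)) := by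
        gcongr
      _ = (1 - ((CD : ℝ≥0∞) ^ 3)⁻¹) ^ (j + 1) * μ (Metric.ball x r) := by ring

theorem exists_tsum_ballGauge_le (h : IsDoublingWith μ CD) (hs : 0 < s) :
    ∃ C : ℝ≥0, ∀ (x z : X) (r : ℝ), 0 < r → r / 2 ≤ dist x z →
      ∑' j : ℕ, ballGauge μ s x (r / 4 ^ j) ≤ C * ballGauge μ s x r := by
  set θ : ℝ≥0∞ := 1 - ((CD : ℝ≥0∞) ^ 3)⁻¹
  have hs' : 0 < 1 / s := one_div_pos.2 hs
  have hθ : θ ^ (1 / s) < 1 := ENNReal.rpow_lt_one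
    (ENNReal.sub_lt_self one_ne_top one_ne_zero (ENNReal.inv_ne_zero.2 (by simp))) hs'
  refine ⟨(1 - θ ^ (1 / s))⁻¹.toNNReal, fun x z r hr hz => ?_⟩
  rw [ENNReal.coe_toNNReal (ENNReal.inv_ne_top.2 (tsub_pos_of_lt hθ).ne'), ← ENNReal.tsum_geometric,
    ← ENNReal.tsum_mul_right]
  refine ENNReal.tsum_le_tsum fun j => ?_
  calc ballGauge μ s x (r / 4 ^ j) ≤ (θ ^ j * μ (Metric.ball x r)) ^ (1 / s) :=
        ENNReal.rpow_le_rpow (h.measure_ball_div_four_pow_le hr hz j) hs'.le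
    _ = (θ ^ (1 / s)) ^ j * ballGauge μ s x r := by
        rw [ENNReal.mul_rpow_of_nonneg _ _ hs'.le, ballGauge, ← ENNReal.rpow_natCast,
          ← ENNReal.rpow_natCast, ← ENNReal.rpow_mul, ← ENNReal.rpow_mul, mul_comm (j : ℝ)]

variable [Nontrivial X]

theorem tendsto_ballGauge_zero (h : IsDoublingWith μ CD) (hs : 0 < s) (x : X) :
    Tendsto (ballGauge μ s x) (𝓝 0) (𝓝 0) := by
  obtain ⟨z, hz⟩ := exists_ne x
  have hr : 0 < dist x z := dist_pos.2 hz.symm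
  obtain ⟨C, hC⟩ := h.exists_tsum_ballGauge_le hs
  have hsum : ∑' j : ℕ, ballGauge μ s x (dist x z / 4 ^ j) ≠ ⊤ :=
    ne_top_of_le_ne_top (ENNReal.mul_ne_top coe_ne_top (h.ballGauge_ne_top hs x _))
      (hC x z _ hr (half_le_self hr.le))
  refine ENNReal.tendsto_nhds_zero.2 fun ε hε => ?_
  obtain ⟨j, hj⟩ :=
    (ENNReal.tendsto_nhds_zero.1 (ENNReal.tendsto_atTop_zero_of_tsum_ne_top hsum) ε hε).exists
  filter_upwards [Iio_mem_nhds (by positivity : 0 < dist x z / 4 ^ j)] with r hr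
  exact (ballGauge_mono hs x (mem_Iio.1 hr).le).trans hj

theorem tendsto_qDelta_zero (h : IsDoublingWith μ CD) (hs : 0 < s) (hδ : 0 < δ) (x : X) :
    Tendsto (qDelta μ s δ x) (𝓝 x) (𝓝 0) := by
  have hdist : Tendsto (fun y => 2 * dist x y) (𝓝 x) (𝓝 0) :=
    (by fun_prop : Continuous fun y => 2 * dist x y).tendsto' x 0 (by simp)
  refine tendsto_of_tendsto_of_tendsto_of_le_of_le' tendsto_const_nhds
    ((h.tendsto_ballGauge_zero hs x).comp hdist) (Eventually.of_forall fun _ => bot_le) ?_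
  filter_upwards [ball_mem_nhds x hδ] with y hy
  exact qDelta_le_ballGauge hs le_rfl (mem_ball'.1 hy).le

end IsDoublingWith

end ReverseDoubling

end BallGauge

/-! ### Weak metric doubling measures -/

section WeakMetricDoubling

variable {X : Type*} [MetricSpace X] [MeasurableSpace X] {μ : Measure X} {s δ r : ℝ} {x y : X}
  {CD CW : ℝ≥0}

theorem qmu_ne_top_of_tendsto [PreconnectedSpace X]
    (h : ∀ x : X, Tendsto (qmu μ s x) (𝓝 x) (𝓝 0)) (x y : X) : qmu μ s x y ≠ ⊤ := by
  refine PreconnectedSpace.induction₂' (fun x y => qmu μ s x y ≠ ⊤) (fun x => ?_)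
    ⟨fun x y z hxy hyz => ne_top_of_le_ne_top (ENNReal.add_ne_top.2 ⟨hxy, hyz⟩)
      (qmu_triangle x y z)⟩ x y
  filter_upwards [(h x).eventually (gt_mem_nhds zero_lt_top)] with y hy
  exact ⟨hy.ne, by rw [qmu_comm]; exact hy.ne⟩

namespace IsWMDM

theorem ballGauge_le_mul_qmu (hw : IsWMDM μ s CW) (hs : 0 < s) (hr : r ≤ dist x y) :
    ballGauge μ s x r ≤ CW * qmu μ s x y :=
  (ballGauge_mono hs x hr).trans ((ballGauge_le_measure_pairBall_rpow hs x y).trans (hw x y))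

theorem eq_of_qmu_eq_zero (hw : IsWMDM μ s CW) (h : IsDoublingWith μ CD) (hs : 0 < s)
    (hxy : qmu μ s x y = 0) : x = y := by
  by_contra hne
  have hle := hw.ballGauge_le_mul_qmu hs (le_refl (dist x y))
  rw [hxy, mul_zero] at hle
  exact hle.not_gt (h.ballGauge_pos (dist_pos.2 hne) x)

theorem ballGauge_div_lt_qmu (hw : IsWMDM μ s CW) (h : IsDoublingWith μ CD) (hs : 0 < s)
    (hr : 0 < r) (hxy : r ≤ dist x y) : ballGauge μ s x r / (CW + 1) < qmu μ s x y := by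
  have hle := hw.ballGauge_le_mul_qmu hs hxy
  have hq : 0 < qmu μ s x y := pos_iff_ne_zero.2 fun hq =>
    (hr.trans_le hxy).ne' (dist_eq_zero.2 (hw.eq_of_qmu_eq_zero h hs hq))
  rcases eq_or_ne (qmu μ s x y) ⊤ with hq' | hq'
  · rw [hq']
    exact (ENNReal.div_ne_top (h.ballGauge_ne_top hs x r) (by simp)).lt_top
  refine ENNReal.div_lt_of_lt_mul' (hle.trans_lt ?_)
  rw [add_mul, one_mul]
  exact ENNReal.lt_add_right (ENNReal.mul_ne_top coe_ne_top hq') hq.ne'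

theorem exists_forall_qmu_lt_imp_dist_lt (hw : IsWMDM μ s CW) (h : IsDoublingWith μ CD)
    (hs : 0 < s) (x : X) (hr : 0 < r) :
    ∃ ε : ℝ≥0∞, 0 < ε ∧ ∀ y : X, qmu μ s x y < ε → dist x y < r := by
  refine ⟨ballGauge μ s x r / (CW + 1),
    ENNReal.div_pos (h.ballGauge_pos hr x).ne' (by simp), fun y hy => ?_⟩
  contrapose! hy
  exact (hw.ballGauge_div_lt_qmu h hs hr hy).le

section Uniform

variable [OpensMeasurableSpace X] [PreconnectedSpace X] [Nontrivial X]

theorem exists_eventually_ballGauge_le_mul_qDelta (hw : IsWMDM μ s CW) (h : IsDoublingWith μ CD)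
    (hs : 0 < s) (hxy : x ≠ y) :
    ∃ δ > 0, ∀ᶠ p : X × X in 𝓝 (x, y), ballGauge μ s p.1 (dist p.1 p.2) ≤
      2 * (CD ^ (1 / s) : ℝ≥0) * (CW + 1) * qDelta μ s δ p.1 p.2 := by
  have hd : 0 < dist x y := dist_pos.2 hxy
  set T : ℝ≥0∞ := ballGauge μ s x (dist x y) / (CW + 1) with hT
  have hT0 : 0 < T / 2 / 2 := ENNReal.half_pos
    (ENNReal.half_pos (ENNReal.div_pos (h.ballGauge_pos hd x).ne' (by simp)).ne').ne'
  obtain ⟨δ, hδ, hTδ⟩ := exists_lt_qDelta (hw.ballGauge_div_lt_qmu h hs hd le_rfl)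
  have hdist : Continuous fun p : X × X => dist p.1 p.2 + dist p.1 x := by fun_prop
  have hlt : dist x y + dist x x < 2 ^ 1 * dist x y := by rw [dist_self]; linarith
  refine ⟨δ, hδ, ?_⟩
  filter_upwards [continuousAt_fst.eventually (ENNReal.tendsto_nhds_zero.1
      (h.tendsto_qDelta_zero hs hδ x) _ hT0),
    continuousAt_snd.eventually (ENNReal.tendsto_nhds_zero.1
      (h.tendsto_qDelta_zero hs hδ y) _ hT0),
    hdist.continuousAt.eventually (gt_mem_nhds hlt)]
    with p hx hy hp
  have hq : T / 2 ≤ qDelta μ s δ p.1 p.2 := by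
    by_contra! hlt
    refine hTδ.not_ge ?_
    calc qDelta μ s δ x y ≤ qDelta μ s δ x p.1 + (qDelta μ s δ p.1 p.2 + qDelta μ s δ y p.2) := by
          rw [qDelta_comm y]
          exact (qDelta_triangle x p.1 y).trans (by gcongr; exact qDelta_triangle _ _ _)
      _ ≤ T / 2 / 2 + (T / 2 + T / 2 / 2) := by gcongr
      _ = T := by rw [add_comm (T / 2), ← add_assoc, ENNReal.add_halves, ENNReal.add_halves]
  calc ballGauge μ s p.1 (dist p.1 p.2)
      ≤ (CD ^ (1 / s) : ℝ≥0) ^ 1 * ballGauge μ s x (dist x y) := h.ballGauge_le_pow_mul hs 1 hp.le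
    _ = (CD ^ (1 / s) : ℝ≥0) * ((CW + 1) * T) := by
        rw [pow_one, hT, ENNReal.mul_div_cancel (by simp) (by simp)]
    _ = 2 * (CD ^ (1 / s) : ℝ≥0) * (CW + 1) * (T / 2) := by
        rw [mul_comm (2 : ℝ≥0∞), mul_right_comm _ 2, mul_assoc _ 2,
          ENNReal.mul_div_cancel two_ne_zero ofNat_ne_top, mul_assoc]
    _ ≤ _ := by gcongr

theorem exists_forall_ballGauge_le_mul_qDelta (hw : IsWMDM μ s CW) (h : IsDoublingWith μ CD)
    (hs : 0 < s) {Q : Set X} (hQ : IsCompact Q) (hr : 0 < r) :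
    ∃ δ > 0, ∀ x ∈ Q, ∀ y ∈ Q, r ≤ dist x y → ballGauge μ s x (dist x y) ≤
      2 * (CD ^ (1 / s) : ℝ≥0) * (CW + 1) * qDelta μ s δ x y := by
  have hK : IsCompact (Q ×ˢ Q ∩ {p : X × X | r ≤ dist p.1 p.2}) :=
    (hQ.prod hQ).inter_right (isClosed_le continuous_const continuous_dist)
  suffices ∃ δ > 0, ∀ p ∈ Q ×ˢ Q ∩ {p : X × X | r ≤ dist p.1 p.2}, ballGauge μ s p.1 (dist p.1 p.2)
      ≤ 2 * (CD ^ (1 / s) : ℝ≥0) * (CW + 1) * qDelta μ s δ p.1 p.2 by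
    obtain ⟨δ, hδ, hp⟩ := this
    exact ⟨δ, hδ, fun x hx y hy hxy => hp (x, y) ⟨⟨hx, hy⟩, hxy⟩⟩
  refine hK.induction_on ⟨1, one_pos, by simp⟩
    (fun A B hAB ⟨δ, hδ, hB⟩ => ⟨δ, hδ, fun p hp => hB p (hAB hp)⟩) ?_ fun p hp => ?_
  · rintro A B ⟨δ, hδ, hA⟩ ⟨ε, hε, hB⟩
    refine ⟨min δ ε, lt_min hδ hε, ?_⟩
    rintro p (hp | hp)
    · exact (hA p hp).trans (by gcongr; exact qDelta_anti _ _ (min_le_left _ _))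
    · exact (hB p hp).trans (by gcongr; exact qDelta_anti _ _ (min_le_right _ _))
  · obtain ⟨δ, hδ, hev⟩ :=
      hw.exists_eventually_ballGauge_le_mul_qDelta h hs (dist_pos.1 (hr.trans_le hp.2))
    exact ⟨_, mem_nhdsWithin_of_mem_nhds hev, δ, hδ, fun q hq => hq⟩

end Uniform

end IsWMDM

end WeakMetricDoubling

/-! ### Cuts of simply connected spaces -/

section Cuts

variable {S : Type*} [TopologicalSpace S]

theorem exists_continuousMap_eventuallyEq_zero_one [NormalSpace S] {K₁ K₂ : Set S}
    (h₁ : IsClosed K₁) (h₂ : IsClosed K₂) (hK : Disjoint K₁ K₂) :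
    ∃ φ : C(S, ℝ), (∀ z ∈ K₁, φ =ᶠ[𝓝 z] 0) ∧ ∀ z ∈ K₂, φ =ᶠ[𝓝 z] 1 := by
  obtain ⟨U₁, hU₁, hKU₁, hU₁K⟩ := normal_exists_closure_subset h₁ h₂.isOpen_compl
    hK.subset_compl_right
  obtain ⟨U₂, hU₂, hKU₂, hU₂K⟩ := normal_exists_closure_subset h₂ isClosed_closure.isOpen_compl
    (subset_compl_comm.1 hU₁K)
  obtain ⟨φ, hφ₁, hφ₂, -⟩ := exists_continuous_zero_one_of_isClosed isClosed_closure
    isClosed_closure (subset_compl_iff_disjoint_left.1 hU₂K)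
  exact ⟨φ, fun z hz => (hφ₁.mono subset_closure).eventuallyEq_of_mem (hU₁.mem_nhds (hKU₁ hz)),
    fun z hz => (hφ₂.mono subset_closure).eventuallyEq_of_mem (hU₂.mem_nhds (hKU₂ hz))⟩

section SimplyConnected

variable [SimplyConnectedSpace S] [LocallyPathConnectedSpace S]

theorem exists_int_continuous_sub {g : S → ℝ}
    (hg : Continuous fun z => (g z : AddCircle (1 : ℝ))) :
    ∃ n : S → ℤ, Continuous fun z => g z - n z := by
  obtain ⟨a⟩ : Nonempty S := inferInstance
  obtain ⟨h, ⟨-, hh⟩, -⟩ := (AddCircle.isCoveringMap_coe (1 : ℝ)).existsUnique_continuousMap_lifts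
    ⟨_, hg⟩ a (g a) rfl
  have hint : ∀ z, ∃ n : ℤ, (n : ℝ) = g z - h z := by
    intro z
    have hz : ((g z - h z : ℝ) : AddCircle (1 : ℝ)) = 0 := by
      rw [AddCircle.coe_sub, sub_eq_zero]
      exact (congrFun hh z).symm
    simpa using (AddCircle.coe_eq_zero_iff (1 : ℝ)).1 hz
  choose n hn using hint
  exact ⟨n, by simpa [hn] using h.continuous⟩

variable [NormalSpace S] {K₁ K₂ : Set S}

/-- Exactness of the Mayer–Vietoris sequence at `H⁰`: a locally constant function on the complement
of `K₁ ∪ K₂` is a sum of two locally constant functions on the complements of `K₁` and of `K₂`. -/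
theorem exists_add_eq_of_continuousAt_compl_union (h₁ : IsClosed K₁) (h₂ : IsClosed K₂)
    (hK : Disjoint K₁ K₂) {f : S → ℤ} (hf : ∀ z ∉ K₁ ∪ K₂, ContinuousAt f z) :
    ∃ f₁ f₂ : S → ℤ, (∀ z ∉ K₁, ContinuousAt f₁ z) ∧ (∀ z ∉ K₂, ContinuousAt f₂ z) ∧
      f₁ + f₂ = f := by
  have hcast : ∀ (g : S → ℤ) (z : S), ContinuousAt (fun z => (g z : ℝ)) z → ContinuousAt g z :=
    fun g z => Int.isClosedEmbedding_coe_real.isInducing.continuousAt_iff.2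
  obtain ⟨φ, hφ₁, hφ₂⟩ := exists_continuousMap_eventuallyEq_zero_one h₁ h₂ hK
  have hφf : ∀ z ∉ K₁ ∪ K₂, ContinuousAt (fun z => φ z * (f z : ℝ)) z := fun z hz =>
    φ.continuous.continuousAt.mul
      ((continuous_of_discreteTopology (f := ((↑) : ℤ → ℝ))).continuousAt.comp (hf z hz))
  have hg : Continuous fun z => ((φ z * f z : ℝ) : AddCircle (1 : ℝ)) := by
    refine continuous_iff_continuousAt.2 fun z => ?_
    by_cases hz : z ∈ K₁ ∪ K₂
    · suffices h : (fun z => ((φ z * f z : ℝ) : AddCircle (1 : ℝ))) =ᶠ[𝓝 z] fun _ => 0 from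
        continuousAt_const.congr h.symm
      rcases hz with hz | hz
      · filter_upwards [hφ₁ z hz] with a ha
        simp [ha]
      · filter_upwards [hφ₂ z hz] with a ha
        rw [ha, AddCircle.coe_eq_zero_iff]
        exact ⟨f a, by simp⟩
    · exact (AddCircle.continuous_mk' 1).continuousAt.comp (hφf z hz)
  obtain ⟨n, hn⟩ := exists_int_continuous_sub hg
  have hnK₂ : ∀ z ∉ K₂, ContinuousAt n z := by
    refine fun z hz₂ => hcast n z ?_
    by_cases hz₁ : z ∈ K₁
    · refine hn.neg.continuousAt.congr ?_
      filter_upwards [hφ₁ z hz₁] with a ha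
      simp [ha]
    · exact ((hφf z (by simp [hz₁, hz₂])).sub hn.continuousAt).congr
        (Eventually.of_forall fun _ => sub_sub_cancel _ _)
  refine ⟨f - n, n, fun z hz₁ => ?_, hnK₂, sub_add_cancel f n⟩
  by_cases hz₂ : z ∈ K₂
  · refine hcast _ z (hn.continuousAt.congr ?_)
    filter_upwards [hφ₂ z hz₂] with a ha
    simp [ha]
  · exact (hf z (by simp [hz₁, hz₂])).sub (hnK₂ z hz₂)

end SimplyConnected

/-- The set `K` separates `p` from `p'`: some integer-valued function that is locally constant off
`K` takes different values at `p` and `p'`. Integer values (rather than two colours) make the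
separating functions a group, and continuity is only required at the points outside `K`. -/
def IsCut (K : Set S) (p p' : S) : Prop :=
  p ∉ K ∧ p' ∉ K ∧ ∃ f : S → ℤ, (∀ z ∉ K, ContinuousAt f z) ∧ f p ≠ f p'

namespace IsCut

variable {K K₁ K₂ : Set S} {p p' : S}

theorem of_isOpen {U : Set S} (hU : IsOpen U) (hUK : ∀ z ∉ K, z ∉ U → ∀ᶠ z' in 𝓝 z, z' ∉ U)
    (hpK : p ∉ K) (hp'K : p' ∉ K) (hp : p ∈ U) (hp' : p' ∉ U) : IsCut K p p' := by
  refine ⟨hpK, hp'K, U.indicator 1, fun z hz => ?_, by simp [hp, hp']⟩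
  by_cases hzU : z ∈ U
  · refine (continuousAt_const (y := 1)).congr ?_
    filter_upwards [hU.mem_nhds hzU] with z' hz'
    simp [hz']
  · refine (continuousAt_const (y := 0)).congr ?_
    filter_upwards [hUK z hz hzU] with z' hz'
    simp [hz']

/-- Janiszewski's theorem. -/
theorem left_or_right_of_union [NormalSpace S] [SimplyConnectedSpace S]
    [LocallyPathConnectedSpace S] (h : IsCut (K₁ ∪ K₂) p p') (h₁ : IsClosed K₁) (h₂ : IsClosed K₂)
    (hK : Disjoint K₁ K₂) : IsCut K₁ p p' ∨ IsCut K₂ p p' := by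
  obtain ⟨hp, hp', f, hf, hfp⟩ := h
  obtain ⟨f₁, f₂, hf₁, hf₂, rfl⟩ := exists_add_eq_of_continuousAt_compl_union h₁ h₂ hK hf
  rw [mem_union, not_or] at hp hp'
  by_cases hne : f₁ p = f₁ p'
  · exact Or.inr ⟨hp.2, hp'.2, f₂, hf₂, by simpa [hne] using hfp⟩
  · exact Or.inl ⟨hp.1, hp'.1, f₁, hf₁, hne⟩

theorem inter_nonempty (h : IsCut K p p') {F : Set S} (hF : IsPreconnected F) (hp : p ∈ F)
    (hp' : p' ∈ F) : (K ∩ F).Nonempty := by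
  obtain ⟨-, -, f, hf, hfp⟩ := h
  by_contra hKF
  have hcont : ContinuousOn f F := fun z hz =>
    (hf z fun hzK => hKF ⟨z, hzK, hz⟩).continuousWithinAt
  exact hfp (hF.constant hcont hp hp')

variable {X : Type*} [TopologicalSpace X] {φ : S → X} {L : Set X}

theorem inter_nonempty_of_preimage (hφ : IsOpenEmbedding φ) (h : IsCut (φ ⁻¹' L) p p') {F : Set X}
    (hF : IsPreconnected F) (hFφ : F ⊆ range φ) (hp : φ p ∈ F) (hp' : φ p' ∈ F) :
    (L ∩ F).Nonempty := by
  obtain ⟨z, hzL, hzF⟩ := h.inter_nonempty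
    (hF.preimage_of_isOpenMap hφ.injective hφ.isOpenMap hFφ) hp hp'
  exact ⟨φ z, hzL, hzF⟩

theorem of_preimage [T2Space X] (hφ : IsOpenEmbedding φ) {C : Set S} (hC : IsCompact C)
    (hC' : IsPreconnected Cᶜ) (hL : L ⊆ φ '' C) (h : IsCut (φ ⁻¹' L) p p') :
    IsCut L (φ p) (φ p') := by
  obtain ⟨hp, hp', f, hf, hfp⟩ := h
  have hfC : ContinuousOn f Cᶜ := fun z hz => (hf z fun hzL => hz <| by
    obtain ⟨w, hw, hwz⟩ := hL hzL
    exact hφ.injective hwz ▸ hw).continuousWithinAt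
  obtain ⟨c, hc⟩ : ∃ c, ∀ z ∉ C, f z = c := by
    rcases Cᶜ.eq_empty_or_nonempty with hCe | ⟨w, hw⟩
    · exact ⟨0, fun z hz => absurd (show z ∈ Cᶜ from hz) (hCe ▸ notMem_empty z)⟩
    · exact ⟨f w, fun z hz => hC'.constant hfC hz hw⟩
  have hext : ∀ z, Function.extend φ f (fun _ => c) (φ z) = f z := hφ.injective.extend_apply f _
  refine ⟨hp, hp', Function.extend φ f fun _ => c, fun x hx => ?_, by rwa [hext, hext]⟩
  by_cases hxC : x ∈ φ '' C
  · obtain ⟨z, -, rfl⟩ := hxC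
    exact hφ.continuousAt_iff.1 ((hf z hx).congr (Eventually.of_forall fun w => (hext w).symm))
  · refine (continuousAt_const (y := c)).congr ?_
    filter_upwards [(hC.image hφ.continuous).isClosed.isOpen_compl.mem_nhds hxC] with x' hx'
    by_cases hr : ∃ z, φ z = x'
    · obtain ⟨z, rfl⟩ := hr
      rw [hext, hc z fun hz => hx' (mem_image_of_mem φ hz)]
    · rw [Function.extend_apply' _ _ _ hr]

end IsCut

end Cuts

/-! ### Cuts made of small balls -/

section DiscreteCuts

variable {X : Type*} {δ : ℝ} {B N : Finset X} {x y : X}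

/-- The level set at height `t` of the function `u` on the finite set `N`, each point `n` being
thickened vertically to the interval `[u n, u n + w n)`. -/
def levelLayer (N : Finset X) (u w : X → ℝ≥0∞) (t : ℝ≥0∞) : Finset X :=
  {n ∈ N | u n ≤ t ∧ t < u n + w n}

theorem mem_levelLayer {u w : X → ℝ≥0∞} {t : ℝ≥0∞} :
    x ∈ levelLayer N u w t ↔ x ∈ N ∧ u x ≤ t ∧ t < u x + w x := by
  simp [levelLayer]

variable [MetricSpace X]

/-- The union of the closed `δ`-balls centred at the points of a finite set. -/
def ballUnion (δ : ℝ) (B : Finset X) : Set X := ⋃ v ∈ B, closedBall v δ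

theorem mem_ballUnion : x ∈ ballUnion δ B ↔ ∃ v ∈ B, dist x v ≤ δ := by
  simp [ballUnion]

theorem isClosed_ballUnion (δ : ℝ) (B : Finset X) : IsClosed (ballUnion δ B) :=
  B.finite_toSet.isClosed_biUnion fun _ _ => isClosed_closedBall

/-- A finite set is `η`-chain connected if no proper nonempty subset is closed under steps of
length at most `η`. -/
def IsChainConnected (η : ℝ) (B : Finset X) : Prop :=
  ∀ V ⊆ B, V.Nonempty → (∀ u ∈ V, ∀ v ∈ B, dist u v ≤ η → v ∈ V) → V = B

theorem IsChainConnected.exists_qDelta_le_sum [MeasurableSpace X] {μ : Measure X}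
    {s ε η σ : ℝ} {w : X → ℝ≥0∞} (hB : IsChainConnected η B) {k b : X} (hk : k ∈ B) (hb : b ∈ B)
    (hσ : 0 < σ) (hkb : σ ≤ dist k b)
    (hw : ∀ u ∈ B, ∀ v ∈ B, dist u v ≤ η → qDelta μ s ε u v ≤ w v) :
    ∃ b' ∈ B, σ ≤ dist k b' ∧ qDelta μ s ε k b' ≤ ∑ v ∈ B with dist k v ≤ σ + η, w v := by
  classical
  -- a maximal set of points inside the open `σ`-ball that are reached from `k` at its own cost
  let IsReached (V : Finset X) : Prop := k ∈ V ∧ (∀ v ∈ V, dist k v < σ) ∧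
    ∀ v ∈ V, qDelta μ s ε k v ≤ ∑ v ∈ V, w v
  have hk' : {k} ∈ {V ∈ B.powerset | IsReached V} := by
    simp [IsReached, hk, hσ, qDelta_self]
  obtain ⟨V, -, hV⟩ := Finset.exists_le_maximal _ hk'
  obtain ⟨hVB, hkV, hVσ, hVw⟩ : V ⊆ B ∧ IsReached V := by simpa using hV.prop
  obtain ⟨u, hu, v, hv, huv, hvV⟩ : ∃ u ∈ V, ∃ v ∈ B, dist u v ≤ η ∧ v ∉ V := by
    by_contra! hclosed
    have hbV : b ∈ V := hB V hVB ⟨k, hkV⟩ hclosed ▸ hb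
    exact (hVσ b hbV).not_ge hkb
  have hsum : qDelta μ s ε k v ≤ ∑ v ∈ insert v V, w v := by
    rw [Finset.sum_insert hvV, add_comm]
    exact (qDelta_triangle k u v).trans (add_le_add (hVw u hu) (hw u (hVB hu) v hv huv))
  have hins : insert v V ⊆ B := Finset.insert_subset hv hVB
  refine ⟨v, hv, ?_, hsum.trans (Finset.sum_le_sum_of_subset fun z hz => ?_)⟩
  · by_contra! hvσ
    have hreach : insert v V ∈ {V ∈ B.powerset | IsReached V} := by
      refine Finset.mem_filter.2 ⟨Finset.mem_powerset.2 hins, Finset.mem_insert_of_mem hkV, ?_, ?_⟩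
      · simpa [hvσ] using hVσ
      · refine Finset.forall_mem_insert _ _ _ |>.2 ⟨hsum, fun z hz => (hVw z hz).trans ?_⟩
        exact Finset.sum_le_sum_of_subset (Finset.subset_insert v V)
    exact hvV (hV.le_of_ge hreach (Finset.subset_insert v V) (Finset.mem_insert_self v V))
  · refine Finset.mem_filter.2 ⟨hins hz, ?_⟩
    rcases Finset.mem_insert.1 hz with rfl | hz
    · linarith [dist_triangle k u z, hVσ u hu]
    · linarith [hVσ z hz, dist_nonneg.trans huv]

variable {S : Type*} [TopologicalSpace S] {φ : S → X} {p p' : S}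

theorem isCut_preimage_ballUnion_levelLayer (hφ : Continuous φ) (hδ : 0 < δ) {u w : X → ℝ≥0∞}
    {t : ℝ≥0∞} (hN : ∀ z, ∃ n ∈ N, dist (φ z) n ≤ δ)
    (huw : ∀ v ∈ N, ∀ v' ∈ N, dist v v' ≤ 3 * δ → u v' ≤ u v + w v)
    (hp : ∀ v ∈ N, dist (φ p) v ≤ 2 * δ → u v + w v ≤ t)
    (hp' : ∀ v ∈ N, dist (φ p') v ≤ 2 * δ → t < u v) :
    IsCut (φ ⁻¹' ballUnion δ (levelLayer N u w t)) p p' := by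
  set U : Set S := {z | ∃ v ∈ N, u v + w v ≤ t ∧ dist (φ z) v < 3 * δ / 2} with hU
  have hUo : IsOpen U := by
    have : U = ⋃ v ∈ {v ∈ N | u v + w v ≤ t}, {z | dist (φ z) v < 3 * δ / 2} := by
      ext z
      simp [hU, and_assoc]
    rw [this]
    exact isOpen_biUnion fun v _ => isOpen_lt (by fun_prop) continuous_const
  have hloc : ∀ z ∉ φ ⁻¹' ballUnion δ (levelLayer N u w t), z ∉ U → ∀ᶠ z' in 𝓝 z, z' ∉ U := by
    intro z hz hzU
    filter_upwards [hφ.continuousAt.eventually (ball_mem_nhds (φ z) (half_pos hδ))]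
    rintro z' hz' ⟨v, hv, hvt, hz'v⟩
    obtain ⟨n, hn, hzn⟩ := hN z
    have hvn : dist v n ≤ 3 * δ := by
      linarith [dist_triangle4 v (φ z') (φ z) n, dist_comm v (φ z'), mem_ball.1 hz']
    have hnt : t < u n + w n := by
      by_contra! hnt
      exact hzU ⟨n, hn, hnt, by linarith⟩
    exact hz (mem_ballUnion.2 ⟨n, mem_levelLayer.2 ⟨hn, (huw v hv n hn hvn).trans hvt, hnt⟩, hzn⟩)
  have hpU : p ∈ U := by
    obtain ⟨n, hn, hpn⟩ := hN p
    exact ⟨n, hn, hp n hn (by linarith), by linarith⟩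
  have hp'U : p' ∉ U := by
    rintro ⟨v, hv, hvt, hv'⟩
    exact (hp' v hv (by linarith)).not_ge (le_self_add.trans hvt)
  refine IsCut.of_isOpen hUo hloc (fun h => ?_) (fun h => ?_) hpU hp'U
  · obtain ⟨v, hv, hpv⟩ := mem_ballUnion.1 h
    obtain ⟨hvN, -, hvt⟩ := mem_levelLayer.1 hv
    exact hvt.not_ge (hp v hvN (by linarith))
  · obtain ⟨v, hv, hpv⟩ := mem_ballUnion.1 h
    obtain ⟨hvN, hvt, -⟩ := mem_levelLayer.1 hv
    exact hvt.not_gt (hp' v hvN (by linarith))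

theorem exists_isChainConnected_isCut [NormalSpace S] [SimplyConnectedSpace S]
    [LocallyPathConnectedSpace S] (hφ : Continuous φ) (h : IsCut (φ ⁻¹' ballUnion δ B) p p') :
    ∃ B' ⊆ B, IsCut (φ ⁻¹' ballUnion δ B') p p' ∧ IsChainConnected (2 * δ) B' := by
  classical
  obtain ⟨B', hB', hmin⟩ :=
    exists_minimal_le_of_wellFoundedLT (fun B => IsCut (φ ⁻¹' ballUnion δ B) p p') B h
  refine ⟨B', hB', hmin.prop, fun V hV hVne hclosed => ?_⟩
  have hunion : φ ⁻¹' ballUnion δ B' = φ ⁻¹' ballUnion δ V ∪ φ ⁻¹' ballUnion δ (B' \ V) := by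
    conv_lhs => rw [← Finset.union_sdiff_of_subset hV]
    rw [ballUnion, Finset.set_biUnion_union, preimage_union]
    rfl
  have hdisj : Disjoint (ballUnion δ V) (ballUnion δ (B' \ V)) := by
    refine disjoint_left.2 fun z hzV hzV' => ?_
    obtain ⟨u, hu, hzu⟩ := mem_ballUnion.1 hzV
    obtain ⟨v, hv, hzv⟩ := mem_ballUnion.1 hzV'
    obtain ⟨hvB, hvV⟩ := Finset.mem_sdiff.1 hv
    exact hvV (hclosed u hu v hvB (by linarith [dist_triangle_left u v z]))
  have hcut := hmin.prop
  simp only [hunion] at hcut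
  rcases hcut.left_or_right_of_union ((isClosed_ballUnion δ V).preimage hφ)
    ((isClosed_ballUnion δ _).preimage hφ) (hdisj.preimage φ) with hcut | hcut
  · exact hmin.eq_of_le hcut hV
  · have hsub := hmin.le_of_le hcut Finset.sdiff_subset
    obtain ⟨v, hv⟩ := hVne
    exact absurd hv (Finset.mem_sdiff.1 (hsub (hV hv))).2

theorem IsLLC.preconnectedSpace {lam : ℝ} (hLLC : IsLLC X lam) : PreconnectedSpace X := by
  refine ⟨isPreconnected_of_forall_pair fun x _ y _ => ?_⟩
  obtain ⟨K, ⟨-, hK⟩, -, hx, hy⟩ := (hLLC x (dist x y + 1) (by positivity)).1 x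
    (mem_ball_self (by positivity)) y (mem_ball'.2 (by linarith))
  exact ⟨K, subset_univ K, hx, hy, hK.isPreconnected⟩

theorem IsLLC.exists_dist_lt_of_isCut {lam r : ℝ} {K : Set X} {k : X} (hLLC : IsLLC X lam)
    (hlam : 1 ≤ lam) (h : IsCut K x y) (hr : 0 < r) (hK : K ⊆ Metric.ball k r) :
    ∃ c ∈ ({x, y} : Set X), dist k c < lam * r := by
  by_contra! hfar
  obtain ⟨F, ⟨-, hF⟩, hFsub, hxF, hyF⟩ := (hLLC k (lam * r) (by positivity)).2 x y
    (fun hx => (hfar x (by simp)).not_gt (mem_ball'.1 hx))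
    (fun hy => (hfar y (by simp)).not_gt (mem_ball'.1 hy))
  obtain ⟨z, hzK, hzF⟩ := h.inter_nonempty hF.isPreconnected hxF hyF
  rw [mul_div_cancel_left₀ r (by positivity)] at hFsub
  exact hFsub hzF (hK hzK)

/-- A cut made of small balls is large at the scale of its distance from one of the two points
it separates. -/
theorem IsLLC.exists_dist_lt_of_isCut_preimage_ballUnion {lam : ℝ} (hLLC : IsLLC X lam)
    (hlam : 1 ≤ lam) (hφ : IsOpenEmbedding φ) {C : Set S} (hC : IsCompact C)
    (hC' : IsPreconnected Cᶜ) (hδ : 0 < δ) (hδρ : δ ≤ dist (φ p) (φ p'))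
    (hball : Metric.ball (φ p) (6 * lam * dist (φ p) (φ p')) ⊆ φ '' C)
    (h : IsCut (φ ⁻¹' ballUnion δ B) p p') :
    ∃ k ∈ B, ∃ b ∈ B, ∃ c ∈ ({φ p, φ p'} : Set X),
      dist k c < 2 * lam * (min (dist (φ p) (φ p')) (dist k b) + δ) := by
  set ρ := dist (φ p) (φ p')
  have hρ0 : 0 < ρ := hδ.trans_le hδρ
  have hlamρ : ρ ≤ lam * ρ := le_mul_of_one_le_left hρ0.le hlam
  have hlamδ : δ ≤ lam * δ := le_mul_of_one_le_left hδ.le hlam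
  obtain ⟨F, ⟨-, hF⟩, hFsub, hpF, hp'F⟩ := (hLLC (φ p) (2 * ρ) (by positivity)).1 (φ p)
    (mem_ball_self (by positivity)) (φ p') (mem_ball'.2 (by linarith))
  have hFφ : F ⊆ range φ := hFsub.trans ((ball_subset_ball (by nlinarith)).trans
    (hball.trans (image_subset_range φ C)))
  obtain ⟨g, hgB, hgF⟩ := h.inter_nonempty_of_preimage hφ hF.isPreconnected hFφ hpF hp'F
  obtain ⟨k, hk, hgk⟩ := mem_ballUnion.1 hgB
  have hkp : dist k (φ p) < 2 * lam * ρ + δ := by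
    linarith [dist_triangle_left k (φ p) g, mem_ball.1 (hFsub hgF)]
  obtain ⟨b, hb, hbmax⟩ := B.exists_max_image (dist k) ⟨k, hk⟩
  refine ⟨k, hk, b, hb, ?_⟩
  rcases le_or_gt ρ (dist k b) with hρb | hbρ
  · exact ⟨φ p, by simp, by rw [min_eq_left hρb]; linarith⟩
  rw [min_eq_right hbρ.le]
  have hsub : ballUnion δ B ⊆ Metric.ball k (dist k b + 2 * δ) := by
    intro z hz
    obtain ⟨v, hv, hzv⟩ := mem_ballUnion.1 hz
    exact mem_ball.2 (by linarith [dist_triangle z v k, hbmax v hv, dist_comm v k])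
  have hcut : IsCut (ballUnion δ B) (φ p) (φ p') := h.of_preimage hφ hC hC' <|
    hsub.trans ((ball_subset_ball' (by linarith)).trans hball)
  obtain ⟨c, hc, hkc⟩ := hLLC.exists_dist_lt_of_isCut hlam hcut (by positivity) hsub
  refine ⟨c, hc, hkc.trans_le ?_⟩
  nlinarith [mul_nonneg (zero_le_one.trans hlam) (dist_nonneg (x := k) (y := b))]

end DiscreteCuts

/-! ### Coarea estimate for the layers -/

section Coarea

/-- Lebesgue measure on the set `[0, ∞]` of heights. -/
def heightMeasure : Measure ℝ≥0∞ := (volume.restrict (Ioi (0 : ℝ))).map ENNReal.ofReal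

theorem heightMeasure_apply {T : Set ℝ≥0∞} (hT : MeasurableSet T) :
    heightMeasure T = volume (ENNReal.ofReal ⁻¹' T ∩ Ioi 0) := by
  rw [heightMeasure, Measure.map_apply ENNReal.measurable_ofReal hT,
    Measure.restrict_apply (ENNReal.measurable_ofReal hT)]

theorem heightMeasure_Ico_le (a b : ℝ≥0∞) : heightMeasure (Ico a b) ≤ b - a := by
  rcases eq_or_ne a ⊤ with rfl | ha
  · simp
  rcases eq_or_ne b ⊤ with rfl | hb
  · simp [ha]
  lift a to ℝ≥0 using ha
  lift b to ℝ≥0 using hb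
  calc heightMeasure (Ico (a : ℝ≥0∞) b) ≤ volume (Ico (a : ℝ) b) := by
        rw [heightMeasure_apply measurableSet_Ico]
        refine measure_mono fun t ⟨⟨hat, htb⟩, ht⟩ => ⟨?_, ?_⟩
        · exact (ENNReal.le_ofReal_iff_toReal_le coe_ne_top (le_of_lt ht)).1 hat
        · exact (ENNReal.ofReal_lt_iff_lt_toReal (le_of_lt ht) coe_ne_top).1 htb
    _ = b - a := by
        rw [Real.volume_Ico, ENNReal.ofReal_sub _ a.coe_nonneg, ENNReal.ofReal_coe_nnreal,
          ENNReal.ofReal_coe_nnreal]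

theorem le_heightMeasure_Ioo (a b : ℝ≥0∞) : b - a ≤ heightMeasure (Ioo a b) := by
  rcases eq_or_ne a ⊤ with rfl | ha
  · simp
  lift a to ℝ≥0 using ha
  have hpos {t : ℝ} (hat : (a : ℝ≥0∞) < ENNReal.ofReal t) : 0 < t :=
    ENNReal.ofReal_pos.1 (bot_le.trans_lt hat)
  rw [heightMeasure_apply measurableSet_Ioo]
  rcases eq_or_ne b ⊤ with rfl | hb
  · calc (⊤ : ℝ≥0∞) - a ≤ volume (Ioi (a : ℝ)) := by simp
      _ ≤ _ := measure_mono fun t hat => by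
        have hat := (ENNReal.lt_ofReal_iff_toReal_lt coe_ne_top).2 hat
        exact ⟨⟨hat, ofReal_lt_top⟩, hpos hat⟩
  lift b to ℝ≥0 using hb
  calc (b : ℝ≥0∞) - a = volume (Ioo (a : ℝ) b) := by
        rw [Real.volume_Ioo, ENNReal.ofReal_sub _ a.coe_nonneg, ENNReal.ofReal_coe_nnreal,
          ENNReal.ofReal_coe_nnreal]
    _ ≤ _ := measure_mono fun t ⟨hat, htb⟩ => by
        have hat := (ENNReal.lt_ofReal_iff_toReal_lt coe_ne_top).2 hat
        exact ⟨⟨hat, (ENNReal.ofReal_lt_iff_lt_toReal (hpos hat).le coe_ne_top).2 htb⟩, hpos hat⟩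

theorem measurable_sum_levelLayer {X : Type*} (N : Finset X) (u w g : X → ℝ≥0∞) :
    Measurable fun t => ∑ n ∈ levelLayer N u w t, g n := by
  simp only [levelLayer, Finset.sum_filter]
  exact Finset.measurable_fun_sum _ fun n _ =>
    Measurable.ite (measurableSet_Ico (a := u n) (b := u n + w n)) measurable_const measurable_const

theorem lintegral_sum_levelLayer_le {X : Type*} (N : Finset X) (u w g : X → ℝ≥0∞) :
    ∫⁻ t, ∑ n ∈ levelLayer N u w t, g n ∂heightMeasure ≤ ∑ n ∈ N, g n * w n := by
  have hsum (t : ℝ≥0∞) : ∑ n ∈ levelLayer N u w t, g n =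
      ∑ n ∈ N, (Ico (u n) (u n + w n)).indicator (fun _ => g n) t := by
    simp [levelLayer, Finset.sum_filter, indicator_apply]
  simp_rw [hsum]
  rw [lintegral_finsetSum _ fun n _ => measurable_const.indicator measurableSet_Ico]
  refine Finset.sum_le_sum fun n _ => ?_
  rw [lintegral_indicator_const measurableSet_Ico]
  gcongr
  exact (heightMeasure_Ico_le _ _).trans (tsub_le_iff_left.2 le_rfl)

variable {X : Type*} [MetricSpace X]

theorem exists_finset_net {Q : Set X} (hQ : IsCompact Q) {δ : ℝ} (hδ : 0 < δ) :
    ∃ N : Finset X, ↑N ⊆ Q ∧ (N : Set X).Pairwise (fun a b => δ ≤ dist a b) ∧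
      ∀ z ∈ Q, ∃ n ∈ N, dist z n ≤ δ := by
  lift δ to ℝ≥0 using hδ.le
  have hδ2 : δ / 2 ≠ 0 := (half_pos (NNReal.coe_pos.1 hδ)).ne'
  obtain ⟨F, -, hF, hFQ⟩ := exists_finite_isCover_of_isCompact hδ2 hQ
  have hpack : packingNumber δ Q ≠ ⊤ := by
    have hle := packingNumber_two_mul_le_externalCoveringNumber (δ / 2) Q
    rw [mul_div_cancel₀ δ two_ne_zero] at hle
    exact (hle.trans hFQ.externalCoveringNumber_le_encard |>.trans_lt hF.encard_lt_top).ne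
  have hfin : (maximalSeparatedSet δ Q).Finite := by
    rwa [← Set.encard_ne_top_iff, encard_maximalSeparatedSet hpack]
  refine ⟨hfin.toFinset, by simpa using maximalSeparatedSet_subset, ?_, fun z hz => ?_⟩
  · intro a ha b hb hab
    have hlt : (δ : ℝ≥0∞) < edist a b := isSeparated_maximalSeparatedSet
      (hfin.mem_toFinset.1 ha) (hfin.mem_toFinset.1 hb) hab
    rw [edist_nndist, ENNReal.coe_lt_coe] at hlt
    exact_mod_cast hlt.le
  · obtain ⟨n, hn, hzn⟩ := mem_iUnion₂.1
      (isCover_iff_subset_iUnion_closedBall.1 (isCover_maximalSeparatedSet hpack) hz)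
    exact ⟨n, hfin.mem_toFinset.2 hn, hzn⟩

variable [MeasurableSpace X] [OpensMeasurableSpace X] {μ : Measure X} {CD : ℝ≥0} {δ r : ℝ}
  {N : Finset X}

theorem IsDoublingWith.sum_ballGauge_sq_le (h : IsDoublingWith μ CD) (hδ : 0 < δ) (hδr : δ ≤ r)
    (hN : (N : Set X).Pairwise fun a b => δ ≤ dist a b) (c : X) :
    ∑ n ∈ N with dist n c < r, ballGauge μ 2 n (6 * δ) ^ 2 ≤
      (CD : ℝ≥0∞) ^ 5 * ballGauge μ 2 c r ^ 2 := by
  calc ∑ n ∈ N with dist n c < r, ballGauge μ 2 n (6 * δ) ^ 2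
      ≤ ∑ n ∈ N with dist n c < r, (CD : ℝ≥0∞) ^ 4 * μ (Metric.ball n (δ / 2)) := by
        refine Finset.sum_le_sum fun n _ => ?_
        rw [ballGauge_sq]
        exact (measure_mono (ball_subset_ball (by linarith))).trans
          (h.measure_ball_two_pow_mul_le n (half_pos hδ) 4)
    _ = (CD : ℝ≥0∞) ^ 4 * μ (⋃ n ∈ ({n ∈ N | dist n c < r} : Finset X),
          Metric.ball n (δ / 2)) := by
        rw [← Finset.mul_sum, measure_biUnion_finset _ fun _ _ => measurableSet_ball]
        exact fun a ha b hb hab => ball_disjoint_ball <| by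
          linarith [hN (Finset.mem_filter.1 ha).1 (Finset.mem_filter.1 hb).1 hab]
    _ ≤ (CD : ℝ≥0∞) ^ 4 * μ (Metric.ball c (2 * r)) := by
        gcongr
        exact iUnion₂_subset fun n hn =>
          ball_subset_ball' (by linarith [(Finset.mem_filter.1 hn).2])
    _ ≤ (CD : ℝ≥0∞) ^ 4 * (CD * μ (Metric.ball c r)) := by
        gcongr
        exact h.2 c r (hδ.trans_le hδr)
    _ = (CD : ℝ≥0∞) ^ 5 * ballGauge μ 2 c r ^ 2 := by rw [ballGauge_sq]; ring

/-- The heights at which the layer of `u` on the finite set `N` at scale `δ` has, inside the ball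
`B(c, r)`, total gauge comparable to the gauge of that ball. -/
def heavyHeights (μ : Measure X) (N : Finset X) (u : X → ℝ≥0∞) (δ : ℝ) (A : ℝ≥0) (c : X) (r : ℝ) :
    Set ℝ≥0∞ :=
  {t | δ ≤ r ∧ ballGauge μ 2 c r ≤
    A * ∑ n ∈ levelLayer {n ∈ N | dist n c < r} u (fun v => ballGauge μ 2 v (6 * δ)) t,
      ballGauge μ 2 n (6 * δ)}

theorem IsDoublingWith.heightMeasure_heavyHeights_le (h : IsDoublingWith μ CD) (hδ : 0 < δ)
    (hN : (N : Set X).Pairwise fun a b => δ ≤ dist a b) (u : X → ℝ≥0∞) (A : ℝ≥0) (c : X) (r : ℝ) :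
    heightMeasure (heavyHeights μ N u δ A c r) ≤ A * CD ^ 5 * ballGauge μ 2 c r := by
  by_cases hδr : δ ≤ r
  swap
  · simp [heavyHeights, hδr]
  set w : X → ℝ≥0∞ := fun v => ballGauge μ 2 v (6 * δ)
  set N' : Finset X := {n ∈ N | dist n c < r}
  set a := ballGauge μ 2 c r
  have ha : a ≠ 0 := (h.ballGauge_pos (hδ.trans_le hδr) c).ne'
  rw [← ENNReal.mul_le_mul_iff_right ha (h.ballGauge_ne_top two_pos c r)]
  have hmeas := measurable_sum_levelLayer N' u w w
  calc a * heightMeasure (heavyHeights μ N u δ A c r)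
      ≤ a * heightMeasure {t | a ≤ A * ∑ n ∈ levelLayer N' u w t, w n} := by
        gcongr
        exact fun t ht => ht.2
    _ ≤ ∫⁻ t, A * ∑ n ∈ levelLayer N' u w t, w n ∂heightMeasure :=
        mul_meas_ge_le_lintegral (hmeas.const_mul _) a
    _ = A * ∫⁻ t, ∑ n ∈ levelLayer N' u w t, w n ∂heightMeasure := lintegral_const_mul _ hmeas
    _ ≤ A * ∑ n ∈ N', w n ^ 2 := by
        gcongr
        simpa only [sq] using lintegral_sum_levelLayer_le N' u w w
    _ ≤ A * (CD ^ 5 * a ^ 2) := by gcongr; exact h.sum_ballGauge_sq_le hδ hδr hN c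
    _ = a * (A * CD ^ 5 * a) := by ring

end Coarea

/-! ### The chain distance is controlled by gauges of balls -/

section UpperBound

variable {X : Type*} [MetricSpace X] [MeasurableSpace X] {μ : Measure X} {s ε δ r : ℝ}
  {A : Set X} {x y z : X} {CD CW G : ℝ≥0} {B N : Finset X}

/-- The chain distance `qDelta μ s δ` of a point to the set `A`. -/
def qDeltaSet (μ : Measure X) (s δ : ℝ) (A : Set X) (z : X) : ℝ≥0∞ := ⨅ a ∈ A, qDelta μ s δ a z

theorem qDeltaSet_of_mem (hz : z ∈ A) : qDeltaSet μ s δ A z = 0 :=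
  le_antisymm (iInf₂_le_of_le z hz (qDelta_self z).le) bot_le

theorem qDeltaSet_le_add (y z : X) :
    qDeltaSet μ s δ A z ≤ qDeltaSet μ s δ A y + qDelta μ s δ y z := by
  unfold qDeltaSet
  simp only [ENNReal.iInf_add]
  exact iInf₂_mono fun a _ => qDelta_triangle a y z

theorem qDelta_le_ballGauge_add_qDeltaSet (hs : 0 < s) (hr : r ≤ δ) (hε : ε ≤ δ) (x z : X) :
    qDelta μ s δ x z ≤ ballGauge μ s x (2 * r) + qDeltaSet μ s ε (Metric.ball x r) z := by
  unfold qDeltaSet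
  simp only [ENNReal.add_iInf]
  refine le_iInf₂ fun a ha => (qDelta_triangle x a z).trans (add_le_add ?_ (qDelta_anti a z hε))
  have ha := (mem_ball'.1 ha).le
  exact qDelta_le_ballGauge hs ha (ha.trans hr)

theorem qDelta_le_ballGauge_add_iInf_qDeltaSet (hs : 0 < s) (hr : r ≤ δ) (hε : ε ≤ δ) (x y : X) :
    qDelta μ s δ x y ≤ ballGauge μ s x (2 * r) + ballGauge μ s y (2 * r) +
      ⨅ b ∈ Metric.ball y r, qDeltaSet μ s ε (Metric.ball x r) b := by
  simp only [ENNReal.add_iInf]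
  refine le_iInf₂ fun b hb => ?_
  have hb := (mem_ball'.1 hb).le
  rw [add_right_comm]
  refine (qDelta_triangle x b y).trans
    (add_le_add (qDelta_le_ballGauge_add_qDeltaSet hs hr hε x b) ?_)
  rw [qDelta_comm]
  exact qDelta_le_ballGauge hs hb (hb.trans hr)

theorem le_dist_of_mem_levelLayer_qDeltaSet (hs : 0 < s) (hδr : 6 * δ ≤ r) {t : ℝ≥0∞}
    (ht : t ∈ Ioo (ballGauge μ s x (2 * r))
      (⨅ b ∈ Metric.ball y r, qDeltaSet μ s ε (Metric.ball x r) b))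
    (hz : z ∈ levelLayer N (qDeltaSet μ s ε (Metric.ball x r))
      (fun v => ballGauge μ s v (6 * δ)) t) :
    ∀ c ∈ ({x, y} : Set X), r ≤ dist z c := by
  obtain ⟨-, huz, hzt⟩ := mem_levelLayer.1 hz
  rintro c (rfl | rfl) <;> by_contra! hzc
  · rw [qDeltaSet_of_mem (mem_ball.2 hzc), zero_add] at hzt
    exact (hzt.trans_le (ballGauge_le_ballGauge hs (by linarith))).not_gt ht.1
  · exact huz.not_gt (ht.2.trans_le (iInf₂_le z (mem_ball.2 hzc)))

theorem isCut_preimage_ballUnion_levelLayer_qDeltaSet {S : Type*} [TopologicalSpace S] {φ : S → X}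
    {p p' : S} (hs : 0 < s) (hφ : Continuous φ) (hδ : 0 < δ) (hδr : 8 * δ ≤ r)
    (hN : ∀ z, ∃ n ∈ N, dist (φ z) n ≤ δ) {t : ℝ≥0∞}
    (ht : t ∈ Ioo (ballGauge μ s (φ p) (2 * r))
      (⨅ b ∈ Metric.ball (φ p') r, qDeltaSet μ s (3 * δ) (Metric.ball (φ p) r) b)) :
    IsCut (φ ⁻¹' ballUnion δ (levelLayer N (qDeltaSet μ s (3 * δ) (Metric.ball (φ p) r))
      (fun v => ballGauge μ s v (6 * δ)) t)) p p' := by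
  refine isCut_preimage_ballUnion_levelLayer hφ hδ hN (fun v _ v' _ hvv' => ?_)
    (fun v _ hv => ?_) (fun v _ hv => ?_)
  · refine (qDeltaSet_le_add v v').trans (add_le_add le_rfl ?_)
    exact (qDelta_le_ballGauge hs hvv' hvv').trans_eq (by ring_nf)
  · rw [qDeltaSet_of_mem (mem_ball'.2 (by linarith)), zero_add]
    refine le_trans (ballGauge_le_ballGauge hs ?_) ht.1.le
    linarith [dist_comm v (φ p)]
  · exact ht.2.trans_le (iInf₂_le v (mem_ball'.2 (by linarith)))

theorem IsDoublingWith.ballGauge_le_mul_sum_of_isChainConnected (h : IsDoublingWith μ CD)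
    (hs : 0 < s) {lam σ : ℝ} (hlam : 1 ≤ lam) {P : ℕ} (hP : 36 * lam ≤ 2 ^ P) (hδ : 0 < δ)
    (hδσ : δ ≤ σ) (hB : IsChainConnected (2 * δ) B) {k b c : X} (hk : k ∈ B) (hb : b ∈ B)
    (hkb : σ ≤ dist k b) (hkc : dist k c ≤ 16 * lam * σ)
    (hG : ∀ x ∈ B, ∀ y ∈ B, σ ≤ dist x y →
      ballGauge μ s x (dist x y) ≤ G * qDelta μ s (3 * δ) x y) :
    ballGauge μ s c (20 * lam * σ) ≤ ((CD ^ (1 / s)) ^ P * G : ℝ≥0) *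
      ∑ v ∈ B with dist v c < 20 * lam * σ, ballGauge μ s v (6 * δ) := by
  have hσ : 0 < σ := hδ.trans_le hδσ
  have hlamσ : σ ≤ lam * σ := le_mul_of_one_le_left hσ.le hlam
  obtain ⟨b', hb', hσb', hsum⟩ := hB.exists_qDelta_le_sum (μ := μ) (s := s) (ε := 3 * δ)
    (w := fun v => ballGauge μ s v (6 * δ)) hk hb hσ hkb fun u _ v _ huv => by
      rw [qDelta_comm]
      rw [dist_comm] at huv
      exact (qDelta_le_ballGauge hs huv (by linarith)).trans (ballGauge_mono hs v (by linarith))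
  have hscale : 20 * lam * σ + dist c k ≤ 2 ^ P * σ := by
    rw [dist_comm]
    linarith [mul_le_mul_of_nonneg_right hP hσ.le]
  calc ballGauge μ s c (20 * lam * σ)
      ≤ ((CD ^ (1 / s) : ℝ≥0) : ℝ≥0∞) ^ P * ballGauge μ s k σ :=
        h.ballGauge_le_pow_mul hs P hscale
    _ ≤ ((CD ^ (1 / s) : ℝ≥0) : ℝ≥0∞) ^ P * (G * qDelta μ s (3 * δ) k b') := by
        gcongr
        exact (ballGauge_mono hs k hσb').trans (hG k hk b' hb' hσb')
    _ ≤ ((CD ^ (1 / s) : ℝ≥0) : ℝ≥0∞) ^ P * (G *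
          ∑ v ∈ B with dist v c < 20 * lam * σ, ballGauge μ s v (6 * δ)) := by
        gcongr
        refine hsum.trans (Finset.sum_le_sum_of_subset fun v hv => ?_)
        obtain ⟨hvB, hkv⟩ := Finset.mem_filter.1 hv
        exact Finset.mem_filter.2 ⟨hvB, by linarith [dist_triangle_left v c k]⟩
    _ = _ := by rw [ENNReal.coe_mul, ENNReal.coe_pow, mul_assoc (_ ^ P)]

theorem exists_div_four_pow_lt_le {τ ρ : ℝ} (hτ : 0 < τ) (hτρ : τ ≤ ρ) :
    ∃ j : ℕ, ρ / 4 ^ (j + 1) < τ ∧ τ ≤ 4 * (ρ / 4 ^ (j + 1)) := by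
  have hρ : 0 < ρ := hτ.trans_le hτρ
  obtain ⟨j, hj, hj'⟩ := exists_nat_pow_near_of_lt_one (div_pos hτ hρ) ((div_le_one hρ).2 hτρ)
    (by norm_num : (0 : ℝ) < 1 / 4) (by norm_num)
  rw [one_div_pow, lt_div_iff₀ hρ, one_div_mul_eq_div] at hj
  rw [one_div_pow, div_le_iff₀ hρ, one_div_mul_eq_div] at hj'
  refine ⟨j, hj, hj'.trans_eq ?_⟩
  field_simp
  ring

section Charts

variable {S : Type*} [TopologicalSpace S] [NormalSpace S] [SimplyConnectedSpace S]
  [LocallyPathConnectedSpace S] {φ : S → X} {C : Set S} {Q : Set X} {lam : ℝ} {p p' : S}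

theorem IsLLC.exists_mem_heavyHeights (hLLC : IsLLC X lam) (hlam : 1 ≤ lam)
    (h : IsDoublingWith μ CD) {P : ℕ} (hP : 36 * lam ≤ 2 ^ P)
    (hφ : IsOpenEmbedding φ) (hC : IsCompact C) (hC' : IsPreconnected Cᶜ)
    (hball : Metric.ball (φ p) (6 * lam * dist (φ p) (φ p')) ⊆ φ '' C)
    (hr : r ≤ dist (φ p) (φ p')) (hδ : 0 < δ) (hδr : 16 * lam * δ ≤ r)
    (hN : ∀ z, ∃ n ∈ N, dist (φ z) n ≤ δ)
    (hG : ∀ x ∈ N, ∀ y ∈ N, r / (16 * lam) ≤ dist x y →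
      ballGauge μ 2 x (dist x y) ≤ G * qDelta μ 2 (3 * δ) x y) {t : ℝ≥0∞}
    (ht : t ∈ Ioo (ballGauge μ 2 (φ p) (2 * r))
      (⨅ b ∈ Metric.ball (φ p') r, qDeltaSet μ 2 (3 * δ) (Metric.ball (φ p) r) b)) :
    ∃ c ∈ ({φ p, φ p'} : Set X), ∃ j : ℕ,
      t ∈ heavyHeights μ N (qDeltaSet μ 2 (3 * δ) (Metric.ball (φ p) r)) δ
        ((CD ^ (1 / 2 : ℝ)) ^ P * G) c (5 * lam * dist (φ p) (φ p') / 4 ^ j) := by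
  have : 0 < lam := zero_lt_one.trans_le hlam
  have hlamδ : δ ≤ lam * δ := le_mul_of_one_le_left hδ.le hlam
  obtain ⟨B, hB, hcut, hBchain⟩ := exists_isChainConnected_isCut hφ.continuous <|
    isCut_preimage_ballUnion_levelLayer_qDeltaSet two_pos hφ.continuous hδ (by linarith) hN ht
  obtain ⟨k, hk, b, hb, c, hc, hkc⟩ :=
    hLLC.exists_dist_lt_of_isCut_preimage_ballUnion hlam hφ hC hC' hδ (by linarith) hball hcut
  have hrk : r ≤ dist k c :=
    le_dist_of_mem_levelLayer_qDeltaSet two_pos (by linarith) ht (hB hk) c hc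
  set ρ := dist (φ p) (φ p')
  set τ := min ρ (dist k b)
  have hτ : 7 * δ < τ := by
    refine lt_of_mul_lt_mul_left ?_ (by positivity : (0 : ℝ) ≤ 2 * lam)
    linarith
  obtain ⟨j, hj, hj'⟩ := exists_div_four_pow_lt_le (by linarith) (min_le_left ρ (dist k b))
  set σ := ρ / 4 ^ (j + 1) with hσ
  have hradius : 5 * lam * ρ / 4 ^ j = 20 * lam * σ := by rw [hσ]; field_simp; ring
  have hδσ : δ ≤ σ := by linarith
  have hkc' : dist k c < 16 * lam * σ := by
    refine hkc.trans_le ?_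
    nlinarith
  have hσr : r / (16 * lam) ≤ σ := by
    rw [div_le_iff₀ (by positivity)]
    linarith
  have hBN : B ⊆ N := hB.trans (Finset.filter_subset _ N)
  refine ⟨c, hc, j, ?_, ?_⟩
  · rw [hradius]
    nlinarith
  · rw [hradius]
    refine (h.ballGauge_le_mul_sum_of_isChainConnected two_pos hlam hP hδ hδσ hBchain hk hb
      (hj.le.trans (min_le_right _ _)) hkc'.le
      fun x hx y hy hxy => hG x (hBN hx) y (hBN hy) (hσr.trans hxy)).trans ?_
    gcongr
    intro v hv
    obtain ⟨hvB, hvc⟩ := Finset.mem_filter.1 hv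
    obtain ⟨hvN, hvt⟩ := mem_levelLayer.1 (hB hvB)
    exact mem_levelLayer.2 ⟨Finset.mem_filter.2 ⟨hvN, hvc⟩, hvt⟩

variable [OpensMeasurableSpace X]

theorem IsLLC.iInf_qDeltaSet_le (hLLC : IsLLC X lam) (hlam : 1 ≤ lam) (h : IsDoublingWith μ CD)
    {P : ℕ} (hP : 36 * lam ≤ 2 ^ P) {K : ℝ≥0}
    (hK : ∀ (x z : X) (r : ℝ), 0 < r → r / 2 ≤ dist x z →
      ∑' j : ℕ, ballGauge μ 2 x (r / 4 ^ j) ≤ K * ballGauge μ 2 x r)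
    (hφ : IsOpenEmbedding φ) (hC : IsCompact C) (hC' : IsPreconnected Cᶜ)
    (hball : Metric.ball (φ p) (6 * lam * dist (φ p) (φ p')) ⊆ φ '' C)
    (hz : 4 * lam * dist (φ p) (φ p') ≤ dist (φ p) z)
    (hr : r ≤ dist (φ p) (φ p')) (hδ : 0 < δ) (hδr : 16 * lam * δ ≤ r)
    (hNδ : (N : Set X).Pairwise fun a b => δ ≤ dist a b) (hN : ∀ z, ∃ n ∈ N, dist (φ z) n ≤ δ)
    (hG : ∀ x ∈ N, ∀ y ∈ N, r / (16 * lam) ≤ dist x y →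
      ballGauge μ 2 x (dist x y) ≤ G * qDelta μ 2 (3 * δ) x y) :
    ⨅ b ∈ Metric.ball (φ p') r, qDeltaSet μ 2 (3 * δ) (Metric.ball (φ p) r) b ≤
      ballGauge μ 2 (φ p) (2 * r) + ((CD ^ (1 / 2 : ℝ)) ^ P * G * CD ^ 5 * K : ℝ≥0) *
        (ballGauge μ 2 (φ p) (5 * lam * dist (φ p) (φ p')) +
          ballGauge μ 2 (φ p') (5 * lam * dist (φ p) (φ p'))) := by
  set ρ := dist (φ p) (φ p')
  set u := qDeltaSet μ 2 (3 * δ) (Metric.ball (φ p) r)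
  set M : ℝ≥0 := (CD ^ (1 / 2 : ℝ)) ^ P * G
  have : 0 < lam := zero_lt_one.trans_le hlam
  have hρ : 0 < ρ := (by positivity : 0 < 16 * lam * δ).trans_le (hδr.trans hr)
  let heavy (c : X) : Set ℝ≥0∞ := ⋃ j : ℕ, heavyHeights μ N u δ M c (5 * lam * ρ / 4 ^ j)
  have hheavy (c : X) (hc : 5 * lam * ρ / 2 ≤ dist c z) :
      heightMeasure (heavy c) ≤ (M * CD ^ 5 * K : ℝ≥0) * ballGauge μ 2 c (5 * lam * ρ) := by
    calc heightMeasure (heavy c)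
        ≤ ∑' j : ℕ, M * CD ^ 5 * ballGauge μ 2 c (5 * lam * ρ / 4 ^ j) :=
          (measure_iUnion_le _).trans <| ENNReal.tsum_le_tsum fun j =>
            h.heightMeasure_heavyHeights_le hδ hNδ u M c _
      _ ≤ M * CD ^ 5 * (K * ballGauge μ 2 c (5 * lam * ρ)) := by
          rw [ENNReal.tsum_mul_left]
          gcongr
          exact hK c z _ (by positivity) hc
      _ = _ := by push_cast; ring
  rw [← tsub_le_iff_left, mul_add]
  refine (le_heightMeasure_Ioo _ _).trans ((measure_mono (t := heavy (φ p) ∪ heavy (φ p')) ?_).trans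
    ((measure_union_le _ _).trans (add_le_add (hheavy _ ?_) (hheavy _ ?_))))
  · intro t ht
    obtain ⟨c, rfl | rfl, j, htj⟩ :=
      hLLC.exists_mem_heavyHeights hlam h hP hφ hC hC' hball hr hδ hδr hN hG ht
    · exact Or.inl (mem_iUnion.2 ⟨j, htj⟩)
    · exact Or.inr (mem_iUnion.2 ⟨j, htj⟩)
  · nlinarith
  · nlinarith [dist_triangle (φ p) (φ p') z]

theorem IsWMDM.qDelta_le (hw : IsWMDM μ 2 CW) (h : IsDoublingWith μ CD) (hlam : 1 ≤ lam)
    (hLLC : IsLLC X lam) {P : ℕ} (hP : 36 * lam ≤ 2 ^ P) {K : ℝ≥0}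
    (hK : ∀ (x z : X) (r : ℝ), 0 < r → r / 2 ≤ dist x z →
      ∑' j : ℕ, ballGauge μ 2 x (r / 4 ^ j) ≤ K * ballGauge μ 2 x r)
    (hφ : IsOpenEmbedding φ) (hQ : IsCompact Q) (hφQ : range φ ⊆ Q)
    (hC : IsCompact C) (hC' : IsPreconnected Cᶜ)
    (hball : Metric.ball (φ p) (6 * lam * dist (φ p) (φ p')) ⊆ φ '' C)
    (hz : 4 * lam * dist (φ p) (φ p') ≤ dist (φ p) z)
    (hr : 0 < r) (hrδ : r ≤ δ) (hrρ : r ≤ dist (φ p) (φ p')) :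
    qDelta μ 2 δ (φ p) (φ p') ≤
      ballGauge μ 2 (φ p) (2 * r) + ballGauge μ 2 (φ p') (2 * r) + (ballGauge μ 2 (φ p) (2 * r) +
        ((CD ^ (1 / 2 : ℝ)) ^ P * (2 * CD ^ (1 / 2 : ℝ) * (CW + 1)) * CD ^ 5 * K : ℝ≥0) *
          (ballGauge μ 2 (φ p) (5 * lam * dist (φ p) (φ p')) +
            ballGauge μ 2 (φ p') (5 * lam * dist (φ p) (φ p')))) := by
  have : PreconnectedSpace X := hLLC.preconnectedSpace
  have : Nontrivial X := ⟨_, _, dist_pos.1 (hr.trans_le hrρ)⟩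
  have : 0 < lam := zero_lt_one.trans_le hlam
  have hδ : 0 < δ := hr.trans_le hrδ
  obtain ⟨ε, hε, hεG⟩ := hw.exists_forall_ballGauge_le_mul_qDelta h two_pos hQ
    (by positivity : 0 < r / (16 * lam))
  obtain ⟨η, hη, hηmin⟩ := exists_between
    (lt_min (by positivity : 0 < r / (16 * lam)) (by positivity : 0 < min ε δ / 3))
  obtain ⟨hηr, hηε⟩ := lt_min_iff.1 hηmin
  obtain ⟨N, hNQ, hNη, hN⟩ := exists_finset_net hQ hη
  have h3ε : 3 * η ≤ ε := by linarith [min_le_left ε δ]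
  have h3δ : 3 * η ≤ δ := by linarith [min_le_right ε δ]
  refine (qDelta_le_ballGauge_add_iInf_qDeltaSet two_pos hrδ h3δ _ _).trans
    (add_le_add le_rfl ?_)
  refine hLLC.iInf_qDeltaSet_le hlam h hP hK hφ hC hC' hball hz hrρ hη
    ((lt_div_iff₀' (by positivity)).1 hηr).le hNη (fun z => hN _ (hφQ (mem_range_self z)))
    fun x hx y hy hxy => ?_
  push_cast
  exact (hεG x (hNQ hx) y (hNQ hy) hxy).trans (by gcongr; exact qDelta_anti x y h3ε)

theorem IsWMDM.exists_qmu_le (hw : IsWMDM μ 2 CW) (h : IsDoublingWith μ CD) (hlam : 1 ≤ lam)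
    (hLLC : IsLLC X lam) (hφ : IsOpenEmbedding φ) (hQ : IsCompact Q) (hφQ : range φ ⊆ Q)
    (hC : IsCompact C) (hC' : IsPreconnected Cᶜ) :
    ∃ A : ℝ≥0, ∀ p p' z, Metric.ball (φ p) (6 * lam * dist (φ p) (φ p')) ⊆ φ '' C →
      4 * lam * dist (φ p) (φ p') ≤ dist (φ p) z → qmu μ 2 (φ p) (φ p') ≤
        A * (ballGauge μ 2 (φ p) (5 * lam * dist (φ p) (φ p')) +
          ballGauge μ 2 (φ p') (5 * lam * dist (φ p) (φ p'))) := by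
  have : PreconnectedSpace X := hLLC.preconnectedSpace
  obtain ⟨P, hP⟩ := pow_unbounded_of_one_lt (36 * lam) one_lt_two
  obtain ⟨K, hK⟩ := h.exists_tsum_ballGauge_le two_pos
  set A : ℝ≥0 := (CD ^ (1 / 2 : ℝ)) ^ P * (2 * CD ^ (1 / 2 : ℝ) * (CW + 1)) * CD ^ 5 * K
  refine ⟨A, fun p p' z hball hz => ?_⟩
  rcases eq_or_ne (φ p) (φ p') with heq | hne
  · simp [heq, qmu_self]
  have : Nontrivial X := ⟨_, _, hne⟩
  refine qmu_le fun δ hδ => ?_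
  have hlim (x : X) : Tendsto (fun r => ballGauge μ 2 x (2 * r)) (𝓝[>] (0 : ℝ)) (𝓝 0) :=
    (h.tendsto_ballGauge_zero two_pos x).comp <|
      ((continuous_const_mul (2 : ℝ)).tendsto' 0 0 (by simp)).mono_left nhdsWithin_le_nhds
  have hsum := ((hlim (φ p)).add (hlim (φ p'))).add ((hlim (φ p)).add
    (tendsto_const_nhds (x := (A : ℝ≥0∞) * (ballGauge μ 2 (φ p) (5 * lam * dist (φ p) (φ p')) +
      ballGauge μ 2 (φ p') (5 * lam * dist (φ p) (φ p'))))))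
  simp only [zero_add] at hsum
  refine ge_of_tendsto hsum ?_
  filter_upwards [Ioc_mem_nhdsGT (lt_min hδ (dist_pos.2 hne))] with r ⟨hr, hrmin⟩
  exact hw.qDelta_le h hlam hLLC hP.le hK hφ hQ hφQ hC hC' hball hz hr
    (hrmin.trans (min_le_left _ _)) (hrmin.trans (min_le_right _ _))

end Charts

end UpperBound

/-! ### Surfaces -/

section Manifold

variable {E : Type*} [NormedAddCommGroup E] [NormedSpace ℝ E]

theorem isPreconnected_compl_closedBall_zero (hE : 1 < Module.rank ℝ E) {r : ℝ} (hr : 0 ≤ r) :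
    IsPreconnected (Metric.closedBall (0 : E) r)ᶜ := by
  have himage : (Metric.closedBall (0 : E) r)ᶜ =
      (fun p : ℝ × E => p.1 • p.2) '' (Ioi r ×ˢ Metric.sphere 0 1) := by
    ext v
    rw [mem_compl_iff, mem_closedBall_zero_iff, not_le]
    constructor
    · intro hv
      have hv0 : ‖v‖ ≠ 0 := (hr.trans_lt hv).ne'
      refine ⟨(‖v‖, ‖v‖⁻¹ • v), ⟨hv, ?_⟩, smul_inv_smul₀ hv0 v⟩
      simp [norm_smul, hv0]
    · rintro ⟨⟨t, w⟩, ⟨ht, hw⟩, rfl⟩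
      rw [norm_smul, mem_sphere_zero_iff_norm.1 hw, mul_one]
      exact lt_of_lt_of_le ht (le_abs_self t)
  rw [himage]
  exact (isPreconnected_Ioi.prod (isPreconnected_sphere hE 0 1)).image _
    continuous_smul.continuousOn

variable [FiniteDimensional ℝ E]

theorem exists_isOpenEmbedding_apply_zero_eq {X : Type*} [TopologicalSpace X] [ChartedSpace E X]
    (x : X) : ∃ φ : E → X, IsOpenEmbedding φ ∧ φ 0 = x ∧ ∃ Q, IsCompact Q ∧ range φ ⊆ Q := by
  have := FiniteDimensional.proper_real E
  let e := chartAt E x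
  obtain ⟨r, hr, hre⟩ := Metric.nhds_basis_closedBall.mem_iff.1 (chart_target_mem_nhds E x)
  let B := OpenPartialHomeomorph.univBall (e x) r
  have hB (v : E) : B v ∈ Metric.ball (e x) r := by
    rw [← OpenPartialHomeomorph.univBall_target (e x) hr]
    exact B.map_source (OpenPartialHomeomorph.univBall_source (e x) r ▸ mem_univ v)
  have hsource : (B.trans e.symm).source = univ := by
    rw [OpenPartialHomeomorph.trans_source, OpenPartialHomeomorph.univBall_source, univ_inter]
    exact eq_univ_of_forall fun v => hre (ball_subset_closedBall (hB v))
  refine ⟨B.trans e.symm, (B.trans e.symm).isOpenEmbedding hsource, ?_,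
    e.symm '' Metric.closedBall (e x) r,
    (isCompact_closedBall _ _).image_of_continuousOn (e.continuousOn_symm.mono hre),
    range_subset_iff.2 fun v => mem_image_of_mem _ (ball_subset_closedBall (hB v))⟩
  rw [OpenPartialHomeomorph.coe_trans, Function.comp_apply,
    OpenPartialHomeomorph.univBall_apply_zero, e.left_inv (mem_chart_source E x)]

theorem nonempty_chartedSpace_of_isOpenEmbedding {H M X : Type*} [TopologicalSpace H]
    [TopologicalSpace M] [ChartedSpace H M] [TopologicalSpace X] {f : X → M}
    (hf : IsOpenEmbedding f) : Nonempty (ChartedSpace H X) := by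
  cases isEmpty_or_nonempty X
  · exact ⟨ChartedSpace.empty H X⟩
  · let := hf.singletonChartedSpace
    exact ⟨ChartedSpace.comp H M X⟩

end Manifold

section Surface

variable {E X : Type*} [NormedAddCommGroup E] [NormedSpace ℝ E] [MetricSpace X]
  [MeasurableSpace X] [OpensMeasurableSpace X] {lam : ℝ} {CD CW : ℝ≥0} {μ : Measure X}

theorem IsWMDM.tendsto_qmu [ChartedSpace E X] (hE : 1 < Module.finrank ℝ E) (hlam : 1 ≤ lam)
    (hLLC : IsLLC X lam) (h : IsDoublingWith μ CD) (hw : IsWMDM μ 2 CW) (x : X) :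
    Tendsto (qmu μ 2 x) (𝓝 x) (𝓝 0) := by
  have : FiniteDimensional ℝ E := Module.finite_of_finrank_pos (zero_lt_one.trans hE)
  have := FiniteDimensional.proper_real E
  have hrank : 1 < Module.rank ℝ E := by exact_mod_cast Module.lt_rank_of_lt_finrank hE
  have : Nontrivial E := Module.nontrivial_of_finrank_pos (R := ℝ) (zero_lt_one.trans hE)
  obtain ⟨φ, hφ, rfl, Q, hQ, hφQ⟩ := exists_isOpenEmbedding_apply_zero_eq (E := E) x
  obtain ⟨v, hv⟩ := exists_ne (0 : E)
  have hφv : φ 0 ≠ φ v := hφ.injective.ne hv.symm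
  have : Nontrivial X := ⟨_, _, hφv⟩
  have : PreconnectedSpace X := hLLC.preconnectedSpace
  obtain ⟨A, hA⟩ := hw.exists_qmu_le h hlam hLLC hφ hQ hφQ (isCompact_closedBall (0 : E) 1)
    (isPreconnected_compl_closedBall_zero hrank zero_le_one)
  have hC : φ '' Metric.closedBall 0 1 ∈ 𝓝 (φ 0) :=
    hφ.image_mem_nhds.2 (Metric.closedBall_mem_nhds 0 one_pos)
  obtain ⟨r, hr, hrC⟩ := Metric.mem_nhds_iff.1 hC
  have hscale (c : ℝ) : Tendsto (fun y => c * dist (φ 0) y) (𝓝 (φ 0)) (𝓝 0) :=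
    ((continuous_const.dist continuous_id).const_mul c).tendsto' _ _ (by simp)
  have hbound : ∀ᶠ y in 𝓝 (φ 0), qmu μ 2 (φ 0) y ≤
      A * (ballGauge μ 2 (φ 0) (5 * lam * dist (φ 0) y) +
        ballGauge μ 2 (φ 0) (6 * lam * dist (φ 0) y)) := by
    filter_upwards [hφ.isOpen_range.mem_nhds (mem_range_self 0),
      (hscale (6 * lam)).eventually_le_const hr,
      (hscale (4 * lam)).eventually_le_const (dist_pos.2 hφv)] with y ⟨p, hp⟩ hyr hyv
    subst hp
    refine (hA 0 p (φ v) ((Metric.ball_subset_ball hyr).trans hrC) hyv).trans ?_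
    gcongr
    refine ballGauge_le_ballGauge two_pos ?_
    rw [dist_comm (φ p)]
    nlinarith [dist_nonneg (x := φ 0) (y := φ p)]
  have hgauge := h.tendsto_ballGauge_zero two_pos (φ 0)
  refine tendsto_of_tendsto_of_tendsto_of_le_of_le' tendsto_const_nhds ?_
    (Eventually.of_forall fun _ => zero_le) hbound
  simpa using ENNReal.Tendsto.const_mul
    ((hgauge.comp (hscale (5 * lam))).add (hgauge.comp (hscale (6 * lam))))
    (Or.inr ENNReal.coe_ne_top)

end Surface

theorem statement3_general {E X : Type*} [NormedAddCommGroup E] [NormedSpace ℝ E]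
    (hE : 1 < Module.finrank ℝ E) [MetricSpace X] [ChartedSpace E X] [MeasurableSpace X]
    [OpensMeasurableSpace X] {lam : ℝ} {CD CW : ℝ≥0} {μ : Measure X}
    (hlam : 1 ≤ lam) (hLLC : IsLLC X lam) (hdbl : IsDoublingWith μ CD) (hw : IsWMDM μ 2 CW) :
    (∀ x y : X, qmu μ 2 x y ≠ ⊤) ∧
      (∀ x : X, qmu μ 2 x x = 0) ∧
      (∀ x y : X, qmu μ 2 x y = 0 → x = y) ∧
      (∀ x y : X, qmu μ 2 x y = qmu μ 2 y x) ∧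
      (∀ x y z : X, qmu μ 2 x z ≤ qmu μ 2 x y + qmu μ 2 y z) ∧
      (∀ (x : X) (ε : ℝ≥0∞), 0 < ε → ∃ δ : ℝ, 0 < δ ∧
        ∀ y : X, dist x y < δ → qmu μ 2 x y < ε) ∧
      (∀ (x : X) (δ : ℝ), 0 < δ → ∃ ε : ℝ≥0∞, 0 < ε ∧
        ∀ y : X, qmu μ 2 x y < ε → dist x y < δ) := by
  have : PreconnectedSpace X := hLLC.preconnectedSpace
  have hcont := hw.tendsto_qmu hE hlam hLLC hdbl
  refine ⟨qmu_ne_top_of_tendsto hcont, qmu_self, fun x y => hw.eq_of_qmu_eq_zero hdbl two_pos,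
    qmu_comm, qmu_triangle, fun x ε hε => ?_,
    fun x δ hδ => hw.exists_forall_qmu_lt_imp_dist_lt hdbl two_pos x hδ⟩
  obtain ⟨δ, hδ, hball⟩ := Metric.eventually_nhds_iff.1 ((hcont x).eventually_lt_const hε)
  exact ⟨δ, hδ, fun y hy => hball (by rwa [dist_comm])⟩

theorem statement3
    {X : Type*} [MetricSpace X] [MeasurableSpace X] [BorelSpace X]
    (lam : ℝ) (CD CW : ℝ≥0) (M : ℕ) (μ : Measure X)
    (hlam : 1 ≤ lam) (hLLC : IsLLC X lam)
    (hhom : ∃ Ω₀ : Set ↥Sphere2, IsCircleDomainS2 Ω₀ ∧ Nonempty (X ≃ₜ ↥Ω₀))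
    (hcpt : CompactSpace (Completion X))
    (hfin : (residComps X).Finite) (hM : (residComps X).ncard = M)
    (hreg : μ.Regular) (hdbl : IsDoublingWith μ CD) (hw : IsWMDM μ 2 CW) :
    (∀ x y : X, qmu μ 2 x y ≠ ⊤) ∧
      (∀ x : X, qmu μ 2 x x = 0) ∧
      (∀ x y : X, qmu μ 2 x y = 0 → x = y) ∧
      (∀ x y : X, qmu μ 2 x y = qmu μ 2 y x) ∧
      (∀ x y z : X, qmu μ 2 x z ≤ qmu μ 2 x y + qmu μ 2 y z) ∧
      (∀ (x : X) (ε : ℝ≥0∞), 0 < ε → ∃ δ : ℝ, 0 < δ ∧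
        ∀ y : X, dist x y < δ → qmu μ 2 x y < ε) ∧
      (∀ (x : X) (δ : ℝ), 0 < δ → ∃ ε : ℝ≥0∞, 0 < ε ∧
        ∀ y : X, qmu μ 2 x y < ε → dist x y < δ) := by
  obtain ⟨Ω₀, hΩ₀, ⟨f⟩⟩ := hhom
  obtain ⟨_⟩ := nonempty_chartedSpace_of_isOpenEmbedding (H := EuclideanSpace ℝ (Fin 2))
    (hΩ₀.1.isOpenEmbedding_subtypeVal.comp f.isOpenEmbedding)
  exact statement3_general (E := EuclideanSpace ℝ (Fin 2)) (by simp) hlam hLLC hdbl hw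

end
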